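/- arXiv:2501.02639 — 4 statements merged into one kernel-verified Lean document; each statement's English description precedes it below -/
import Mathlib

section
/- In C[t, z_{11}, ..., z_{nn}], for all 0 ≤ i < j ≤ n the ideal J_i^t + K_j is prime, where J_i^t = ⟨t z_{1k} + z_{nk} : 1 ≤ k ≤ i⟩ (with J_0^t = 0) and K_j is generated by all j×j minors of the matrix (z_{kℓ}) with row indices from {2,...,n} and column indices 1,...,j (with K_n = 0). -/
open MvPolynomial

/-- The variable `t` in `ℂ[t, z_{ij} : 1 ≤ i, j ≤ n]`. -/
noncomputable def tt (n : ℕ) : MvPolynomial (Option (Fin n × Fin n)) ℂ := X none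

/-- The variable `z_{ij}` in `ℂ[t, z_{ij} : 1 ≤ i, j ≤ n]` (`0`-based indexing). -/
noncomputable def zz (n : ℕ) (i j : Fin n) : MvPolynomial (Option (Fin n × Fin n)) ℂ :=
  X (some (i, j))

/-- The first row index (row `1` in `1`-based indexing). -/
def row1 (n : ℕ) [NeZero n] : Fin n := ⟨0, Nat.pos_of_ne_zero (NeZero.ne n)⟩

/-- The last row index (row `n` in `1`-based indexing). -/
def rowN (n : ℕ) [NeZero n] : Fin n :=
  ⟨n - 1, Nat.sub_lt (Nat.pos_of_ne_zero (NeZero.ne n)) one_pos⟩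

/-- The ideal `J_i^t = ⟨t z_{11} + z_{n1}, …, t z_{1i} + z_{ni}⟩` (so `J_0^t = 0`). -/
noncomputable def Jt (n : ℕ) [NeZero n] (i : ℕ) :
    Ideal (MvPolynomial (Option (Fin n × Fin n)) ℂ) :=
  Ideal.span {f | ∃ k : Fin n, (k : ℕ) < i ∧ f = tt n * zz n (row1 n) k + zz n (rowN n) k}

/-- The ideal `K_j`, generated by the `j × j` minors `p_B` of `(z_{kℓ})` with row set
`B ⊆ {2, …, n}`, `|B| = j`, and columns `1, …, j`.  (For `j ≤ n` the column index
`b % n` is just `b`; for `j = n` no admissible `B` exists, so `K_n = 0`, and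
`K_0 = ⟨det of the empty matrix⟩ = ⊤`, matching the conventions.) -/
noncomputable def Kt (n : ℕ) [NeZero n] (j : ℕ) :
    Ideal (MvPolynomial (Option (Fin n × Fin n)) ℂ) :=
  Ideal.span {f | ∃ B : Fin j → Fin n, StrictMono B ∧ (∀ a, 1 ≤ (B a : ℕ)) ∧
    f = Matrix.det (Matrix.of fun a b : Fin j =>
      zz n (B a) ⟨(b : ℕ) % n, Nat.mod_lt _ (Nat.pos_of_ne_zero (NeZero.ne n))⟩)}

section General

variable {σ : Type*}

theorem MvPolynomial.eval_eq_of_forall_support {f : MvPolynomial σ ℂ} {z z' : σ → ℂ}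
    (h : ∀ d ∈ f.support, ∀ s, d s ≠ 0 → z s = z' s) : eval z f = eval z' f := by
  rw [eval_eq, eval_eq]
  refine Finset.sum_congr rfl fun d hd => ?_
  congr 1
  refine Finset.prod_congr rfl fun s hs => ?_
  rw [h d hd s (Finsupp.mem_support_iff.mp hs)]

/-- The part of `f` which is homogeneous of degree `m` in the single variable `x`. -/
noncomputable def MvPolynomial.partOfDegree (x : σ) (m : ℕ) (f : MvPolynomial σ ℂ) :
    MvPolynomial σ ℂ :=
  ∑ d ∈ f.support with d x = m, monomial d (coeff d f)

theorem MvPolynomial.coeff_partOfDegree (x : σ) (m : ℕ) (f : MvPolynomial σ ℂ) (d : σ →₀ ℕ) :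
    coeff d (partOfDegree x m f) = if d x = m then coeff d f else 0 := by
  classical
  simp only [partOfDegree, coeff_sum, coeff_monomial, Finset.sum_ite_eq', Finset.mem_filter,
    mem_support_iff]
  split_ifs <;> simp_all

theorem MvPolynomial.eval_partOfDegree [Fintype σ] (x : σ) (m : ℕ) (f : MvPolynomial σ ℂ)
    (z : σ → ℂ) :
    eval z (partOfDegree x m f) =
      ∑ d ∈ f.support with d x = m, coeff d f * ∏ s, z s ^ d s := by
  simp only [partOfDegree, map_sum, eval_monomial]
  refine Finset.sum_congr rfl fun d _ => ?_
  rw [Finsupp.prod_fintype _ _ (by simp)]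

theorem MvPolynomial.eval_update_partOfDegree [Fintype σ] [DecidableEq σ] (x : σ) (m : ℕ)
    (f : MvPolynomial σ ℂ) (z : σ → ℂ) (u : ℂ) :
    eval (Function.update z x u) (partOfDegree x m f) * z x ^ m =
      u ^ m * eval z (partOfDegree x m f) := by
  rw [eval_partOfDegree, eval_partOfDegree, Finset.sum_mul, Finset.mul_sum]
  refine Finset.sum_congr rfl fun d hd => ?_
  rw [← Finset.mul_prod_erase _ _ (Finset.mem_univ x),
    ← Finset.mul_prod_erase _ _ (Finset.mem_univ x), (Finset.mem_filter.mp hd).2,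
    Function.update_self]
  rw [Finset.prod_congr rfl fun s hs => by rw [Function.update_of_ne (Finset.ne_of_mem_erase hs)]]
  ring

/-- If `f` vanishes along a curve whose `x`-coordinate has a simple pole at `0`, then the part of
`f` of top degree in `x` vanishes at the limit, in which `x` is given the residue. -/
theorem MvPolynomial.eval_partOfDegree_eq_zero_of_pole [Fintype σ] [DecidableEq σ] {x : σ} {m : ℕ}
    {f : MvPolynomial σ ℂ} (hm : ∀ d ∈ f.support, d x ≤ m) {γ : ℂ → σ → ℂ} (hγ : Continuous γ)
    (h : ∀ ε, ε ≠ 0 → eval (Function.update (γ ε) x (γ ε x / ε)) f = 0) :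
    eval (γ 0) (partOfDegree x m f) = 0 := by
  let F : ℂ → ℂ := fun ε =>
    ∑ d ∈ f.support, coeff d f * (ε ^ (m - d x) * ∏ s, γ ε s ^ d s)
  have hF : F = fun _ => 0 := by
    refine Continuous.ext_on (dense_compl_singleton (0 : ℂ)) (by fun_prop) continuous_const ?_
    intro ε hε
    have hε' : ε ≠ 0 := hε
    have key := h ε hε'
    rw [eval_eq'] at key
    have : F ε = ε ^ m * ∑ d ∈ f.support,
        coeff d f * ∏ s, Function.update (γ ε) x (γ ε x / ε) s ^ d s := by
      simp only [F]
      rw [Finset.mul_sum]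
      refine Finset.sum_congr rfl fun d hd => ?_
      rw [← Finset.mul_prod_erase _ _ (Finset.mem_univ x),
        ← Finset.mul_prod_erase (a := x) (s := Finset.univ)
          (fun s => Function.update (γ ε) x (γ ε x / ε) s ^ d s) (Finset.mem_univ x),
        Function.update_self]
      have hprod : ∏ s ∈ Finset.univ.erase x, Function.update (γ ε) x (γ ε x / ε) s ^ d s =
          ∏ s ∈ Finset.univ.erase x, γ ε s ^ d s :=
        Finset.prod_congr rfl fun s hs => by
          rw [Function.update_of_ne (Finset.ne_of_mem_erase hs)]
      rw [hprod]
      obtain ⟨k, hk⟩ := Nat.exists_eq_add_of_le (hm d hd)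
      rw [hk, Nat.add_sub_cancel_left, div_pow, pow_add]
      field_simp
    rw [this, key, mul_zero]
  have h0 : F 0 = 0 := by rw [hF]
  rw [eval_partOfDegree, Finset.sum_filter]
  refine Eq.trans ?_ h0
  refine Finset.sum_congr rfl fun d hd => ?_
  split_ifs with hd'
  · simp [hd']
  · have : m - d x ≠ 0 := by have := hm d hd; omega
    simp [this]

theorem Finsupp.sum_single_one_le {ι : Type*} [Fintype ι] {x : ι → σ}
    (hx : Function.Injective x) {d : σ →₀ ℕ} (hd : ∀ b, d (x b) ≠ 0) :
    ∑ b, Finsupp.single (x b) 1 ≤ d := by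
  classical
  intro s
  rw [Finsupp.finsetSum_apply]
  by_cases hs : ∃ b, x b = s
  · obtain ⟨b, rfl⟩ := hs
    simp only [Finsupp.single_apply, hx.eq_iff, Finset.sum_ite_eq', Finset.mem_univ, if_true]
    exact Nat.one_le_iff_ne_zero.mpr (hd b)
  · push Not at hs
    simp [hs]

end General

section Locus

variable {n : ℕ}

/-- The exponent `d` is divisible by a product `∏ z_{B b, b}` over the columns `c ≤ b ≤ l`,
with strictly increasing rows `B b`, all of them below row `q`. -/
def HasDiagonal (l c q : Fin n) (d : Option (Fin n × Fin n) →₀ ℕ) : Prop :=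
  ∃ B : Fin n → Fin n, (∀ b, c ≤ b → b ≤ l → q < B b ∧ d (some (B b, b)) ≠ 0) ∧
    StrictMonoOn B (Set.Icc c l)

/-- The exponents of the standard monomials: those which involve none of the variables
`z_{n1}, …, z_{ni}` and contain no diagonal. -/
def IsStandard [NeZero n] (i : ℕ) (l c q : Fin n) (d : Option (Fin n × Fin n) →₀ ℕ) : Prop :=
  (∀ k : Fin n, (k : ℕ) < i → d (some (rowN n, k)) = 0) ∧ ¬ HasDiagonal l c q d

/-- The points where `z_{nk} = - t z_{1k}` for `k ≤ i` and where, in the rows below `q`, column `l`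
is a linear combination of the columns `c ≤ b < l`. -/
def relLocus [NeZero n] (i : ℕ) (l c q : Fin n) : Set (Option (Fin n × Fin n) → ℂ) :=
  {z | (∀ k : Fin n, (k : ℕ) < i → z (some (rowN n, k)) = - (z none * z (some (row1 n, k)))) ∧
    ∃ v : Fin n → ℂ, ∀ a, q < a → z (some (a, l)) = ∑ b ∈ Finset.Ico c l, z (some (a, b)) * v b}

theorem row1_lt_rowN [NeZero n] (hn : 2 ≤ n) : row1 n < rowN n := by
  rw [Fin.lt_def]; simp only [row1, rowN]; omega

theorem le_rowN [NeZero n] (a : Fin n) : a ≤ rowN n := by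
  rw [Fin.le_def]; simp only [rowN]; omega

theorem row1_le [NeZero n] (a : Fin n) : row1 n ≤ a := by
  rw [Fin.le_def]; simp [row1]

/-- The base case of `eq_zero_of_isStandard_of_vanishing`: only column `l` is left. -/
theorem eq_zero_of_vanishing_last_column [NeZero n] (hn : 2 ≤ n) {i : ℕ} {l q : Fin n}
    (hil : i ≤ l) {f : MvPolynomial (Option (Fin n × Fin n)) ℂ}
    (hf : ∀ d ∈ f.support, IsStandard i l l q d)
    (hv : ∀ z ∈ relLocus i l l q, eval z f = 0) : f = 0 := by
  refine MvPolynomial.funext fun z => ?_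
  let z' : Option (Fin n × Fin n) → ℂ
    | none => z none
    | some (a, b) =>
      if q < a ∧ b = l then 0
      else if a = rowN n ∧ (b : ℕ) < i then - (z none * z (some (row1 n, b)))
      else z (some (a, b))
  have hz' : z' ∈ relLocus i l l q := by
    refine ⟨fun k hk => ?_, 0, fun a ha => by simp [z', ha]⟩
    have hkl : k ≠ l := fun h => by subst h; omega
    simp [z', hkl, hk, not_lt.mpr (row1_le q), (row1_lt_rowN hn).ne]
  rw [map_zero, ← hv z' hz']
  refine eval_eq_of_forall_support fun d hd s hs => ?_
  obtain ⟨hbad, hdiag⟩ := hf d hd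
  rcases s with _ | ⟨a, b⟩
  · rfl
  · have h1 : ¬ (q < a ∧ b = l) := by
      rintro ⟨ha, rfl⟩
      refine hdiag ⟨fun _ => a, fun b' h h' => ?_, ?_⟩
      · obtain rfl := le_antisymm h' h
        exact ⟨ha, hs⟩
      · intro x hx y hy hxy
        simp only [Set.Icc_self, Set.mem_singleton_iff] at hx hy
        exact absurd hxy (by rw [hx, hy]; exact lt_irrefl _)
    have h2 : ¬ (a = rowN n ∧ (b : ℕ) < i) := by
      rintro ⟨rfl, hb⟩
      exact hs (hbad b hb)
    simp [z', h1, h2]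

/-- A polynomial vanishing on the locus is zero if column `c` does not occur in it strictly between
row `q` and the last row. -/
theorem eq_zero_of_vanishing_of_free_column [NeZero n] (hn : 2 ≤ n) {i : ℕ} {l c q : Fin n}
    (hil : i ≤ l) (hcl : c < l) {f : MvPolynomial (Option (Fin n × Fin n)) ℂ}
    (hbad : ∀ d ∈ f.support, ∀ k : Fin n, (k : ℕ) < i → d (some (rowN n, k)) = 0)
    (hfree : ∀ d ∈ f.support, ∀ a, q < a → a < rowN n → d (some (a, c)) = 0)
    (hv : ∀ z ∈ relLocus i l c q, eval z f = 0) : f = 0 := by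
  have h1N := row1_lt_rowN hn
  let e : MvPolynomial (Option (Fin n × Fin n)) ℂ :=
    if (c : ℕ) < i then - (X none * X (some (row1 n, c))) else X (some (rowN n, c))
  have he : e ≠ 0 := by
    simp only [e]
    split_ifs
    · exact neg_ne_zero.mpr (mul_ne_zero (X_ne_zero _) (X_ne_zero _))
    · exact X_ne_zero _
  suffices h : f * (e * X (some (rowN n, l))) = 0 from
    (mul_eq_zero.mp h).resolve_right (mul_ne_zero he (X_ne_zero _))
  refine MvPolynomial.funext fun z => ?_
  rw [map_mul, map_mul, map_zero, eval_X]
  by_cases he0 : eval z e = 0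
  · simp [he0]
  by_cases hl0 : z (some (rowN n, l)) = 0
  · simp [hl0]
  let w : ℂ := z (some (rowN n, l)) / eval z e
  have hw : w ≠ 0 := div_ne_zero hl0 he0
  let z' : Option (Fin n × Fin n) → ℂ
    | none => z none
    | some (a, b) =>
      if q < a ∧ a < rowN n ∧ b = c then z (some (a, l)) / w
      else if a = rowN n ∧ (b : ℕ) < i then - (z none * z (some (row1 n, b)))
      else z (some (a, b))
  have hq1 : ¬ q < row1 n := not_lt.mpr (row1_le q)
  have hz' : z' ∈ relLocus i l c q := by
    refine ⟨fun k hk => ?_, Pi.single c w, fun a ha => ?_⟩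
    · simp [z', hk, hq1, h1N.ne]
    · rw [Finset.sum_eq_single c
        (fun b _ hb => by rw [Pi.single_eq_of_ne hb, mul_zero])
        (fun h => absurd (Finset.mem_Ico.mpr ⟨le_rfl, hcl⟩) h), Pi.single_eq_same]
      rcases (le_rowN a).lt_or_eq with haN | rfl
      · simp [z', ha, haN, haN.ne, hcl.ne', hw]
      · have hli : ¬ (l : ℕ) < i := not_lt.mpr hil
        have : z' (some (rowN n, c)) = eval z e := by
          by_cases hc : (c : ℕ) < i <;> simp [z', e, hc]
        rw [this, mul_div_cancel₀ _ he0]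
        simp [z', hli]
  have : eval z f = eval z' f := by
    refine eval_eq_of_forall_support fun d hd s hs => ?_
    rcases s with _ | ⟨a, b⟩
    · rfl
    · have h1 : ¬ (q < a ∧ a < rowN n ∧ b = c) := by
        rintro ⟨ha, haN, rfl⟩
        exact hs (hfree d hd a ha haN)
      have h2 : ¬ (a = rowN n ∧ (b : ℕ) < i) := by
        rintro ⟨rfl, hb⟩
        exact hs (hbad d hd b hb)
      simp [z', h1, h2]
  rw [this, hv z' hz', zero_mul]

/-- If `f` vanishes on the locus and `p` is the first row in which column `c` occurs, then letting
the coefficient of column `c` in the linear relation tend to zero shows that the top part of `f`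
in `z_{pc}` vanishes wherever the rows below `p` satisfy a relation without column `c`. -/
theorem eval_partOfDegree_eq_zero_of_vanishing [NeZero n] {i m : ℕ}
    {l c p q : Fin n} (hil : i ≤ l) (hcl : c < l) (hqp : q < p) (hpN : p < rowN n)
    {f : MvPolynomial (Option (Fin n × Fin n)) ℂ}
    (hfree : ∀ d ∈ f.support, ∀ a, q < a → a < p → d (some (a, c)) = 0)
    (hm : ∀ d ∈ f.support, d (some (p, c)) ≤ m)
    (hv : ∀ z ∈ relLocus i l c q, eval z f = 0)
    {z : Option (Fin n × Fin n) → ℂ}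
    (hz : ∀ k : Fin n, (k : ℕ) < i → z (some (rowN n, k)) = - (z none * z (some (row1 n, k))))
    {v : Fin n → ℂ}
    (hzv : ∀ a, p < a → z (some (a, l)) = ∑ b ∈ Finset.Ioo c l, z (some (a, b)) * v b)
    (hu : z (some (p, l)) ≠ ∑ b ∈ Finset.Ioo c l, z (some (p, b)) * v b) :
    eval z (partOfDegree (some (p, c)) m f) = 0 := by
  let r : Fin n → ℂ := fun a => z (some (a, l)) - ∑ b ∈ Finset.Ioo c l, z (some (a, b)) * v b
  have hr : r p ≠ 0 := sub_ne_zero.mpr hu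
  let γ : ℂ → Option (Fin n × Fin n) → ℂ := fun ε s => match s with
    | none => z none
    | some (a, b) =>
      if b = l ∧ p < a then z (some (a, l)) + ε * z (some (a, c))
      else Function.update z (some (p, c)) (r p) (some (a, b))
  have hγ : Continuous γ := by
    refine continuous_pi fun s => ?_
    rcases s with _ | ⟨a, b⟩
    · exact continuous_const
    · simp only [γ]
      split_ifs <;> fun_prop
  have hγ0 : γ 0 = Function.update z (some (p, c)) (r p) := by
    funext s
    rcases s with _ | ⟨a, b⟩
    · simp [γ]
    · by_cases h : b = l ∧ p < a
      · obtain ⟨rfl, ha⟩ := h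
        simp [γ, ha, ha.ne']
      · simp [γ, h]
  have key : eval (γ 0) (partOfDegree (some (p, c)) m f) = 0 := by
    refine eval_partOfDegree_eq_zero_of_pole hm hγ fun ε hε => ?_
    let w : Option (Fin n × Fin n) → ℂ
      | none => z none
      | some (a, b) =>
        if b = l ∧ p < a then z (some (a, l)) + ε * z (some (a, c))
        else if b = c ∧ q < a ∧ a ≤ p then r a / ε
        else z (some (a, b))
    have hw : w ∈ relLocus i l c q := by
      refine ⟨fun k hk => ?_, Function.update v c ε, fun a ha => ?_⟩
      · have hkl : k ≠ l := fun h => by subst h; omega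
        have hq1 : ¬ q < row1 n := not_lt.mpr (row1_le q)
        simp [w, hkl, hq1, hpN.not_ge, hz k hk]
      · have hsum : ∑ b ∈ Finset.Ioo c l, w (some (a, b)) * Function.update v c ε b =
            ∑ b ∈ Finset.Ioo c l, z (some (a, b)) * v b := by
          refine Finset.sum_congr rfl fun b hb => ?_
          obtain ⟨hcb, hbl⟩ := Finset.mem_Ioo.mp hb
          simp [w, hcb.ne', hbl.ne]
        rw [← Finset.sum_Ioo_add_eq_sum_Ico hcl, hsum, Function.update_self]
        by_cases hap : a ≤ p
        · simp only [w, hap.not_gt, hcl.ne', and_false, if_false, false_and, ha, hap,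
            and_self, if_true, div_mul_cancel₀ _ hε, r]
          ring
        · have hpa := not_le.mp hap
          simp only [w, hpa, hcl.ne, and_true, if_true, if_false, hap, and_false,
            hzv a hpa]
          ring
    rw [← hv w hw]
    refine eval_eq_of_forall_support fun d hd s hs => ?_
    rcases s with _ | ⟨a, b⟩
    · simp [γ, w]
    · by_cases h1 : b = c
      · subst h1
        by_cases h2 : a = p
        · subst h2
          simp [γ, w, hqp, hcl.ne]
        · have h3 : ¬ (q < a ∧ a ≤ p) := fun h =>
            hs (hfree d hd a h.1 (lt_of_le_of_ne h.2 h2))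
          simp [γ, w, h2, h3, hcl.ne]
      · simp [γ, w, h1]
  have := eval_update_partOfDegree (some (p, c)) m f z (r p)
  rw [← hγ0, key, zero_mul] at this
  exact (mul_eq_zero.mp this.symm).resolve_left (pow_ne_zero _ hr)

/-- A polynomial supported on standard monomials and vanishing on the locus is zero. -/
theorem eq_zero_of_isStandard_of_vanishing [NeZero n] (hn : 2 ≤ n) {i : ℕ} {l : Fin n}
    (hil : i ≤ l) (k : ℕ) : ∀ (c q : Fin n), (c : ℕ) + k = l →
    ∀ f : MvPolynomial (Option (Fin n × Fin n)) ℂ, (∀ d ∈ f.support, IsStandard i l c q d) →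
    (∀ z ∈ relLocus i l c q, eval z f = 0) → f = 0 := by
  induction k with
  | zero =>
    intro c q hc f hf hv
    obtain rfl : c = l := Fin.ext (by simpa using hc)
    exact eq_zero_of_vanishing_last_column hn hil hf hv
  | succ k ih =>
    intro c q hc f hf hv
    have hcl : c < l := by rw [Fin.lt_def]; omega
    by_cases hex : ∃ a, q < a ∧ a < rowN n ∧ ∃ d ∈ f.support, d (some (a, c)) ≠ 0
    swap
    · push Not at hex
      exact eq_zero_of_vanishing_of_free_column hn hil hcl (fun d hd => (hf d hd).1)
        (fun d hd a ha haN => hex a ha haN d hd) hv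
    exfalso
    obtain ⟨p, ⟨hqp, hpN, d₀, hd₀, hd₀p⟩, hmin⟩ := WellFounded.has_min
      (wellFounded_lt (α := Fin n))
      {a | q < a ∧ a < rowN n ∧ ∃ d ∈ f.support, d (some (a, c)) ≠ 0} hex
    have hfree : ∀ d ∈ f.support, ∀ a, q < a → a < p → d (some (a, c)) = 0 := by
      intro d hd a hqa hap
      by_contra h
      exact hmin a ⟨hqa, hap.trans hpN, d, hd, h⟩ hap
    obtain ⟨d₁, hd₁, hmax⟩ := f.support.exists_max_image (fun d => d (some (p, c))) ⟨d₀, hd₀⟩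
    let c' : Fin n := ⟨c + 1, by omega⟩
    have hIoo : Finset.Ico c' l = Finset.Ioo c l := by
      ext b
      simp only [Finset.mem_Ico, Finset.mem_Ioo, Fin.le_def, Fin.lt_def, c']
      omega
    have hd₁p : d₁ (some (p, c)) ≠ 0 := by have := hmax d₀ hd₀; omega
    have hzero := ih c' p (by simp only [c']; omega)
      (partOfDegree (some (p, c)) (d₁ (some (p, c))) f) ?_ ?_
    · have := coeff_partOfDegree (some (p, c)) (d₁ (some (p, c))) f d₁
      rw [hzero, coeff_zero, if_pos rfl] at this
      exact mem_support_iff.mp hd₁ this.symm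
    · intro d hd
      rw [mem_support_iff, coeff_partOfDegree] at hd
      obtain ⟨hdp, hd⟩ : d (some (p, c)) = d₁ (some (p, c)) ∧ coeff d f ≠ 0 := by
        split_ifs at hd with h
        · exact ⟨h, hd⟩
        · exact absurd rfl hd
      refine ⟨(hf d (mem_support_iff.mpr hd)).1, ?_⟩
      rintro ⟨B, hB, hmono⟩
      refine (hf d (mem_support_iff.mpr hd)).2 ⟨Function.update B c p, ?_, ?_⟩
      · intro b hcb hbl
        rcases hcb.eq_or_lt with rfl | hcb
        · rw [Function.update_self]
          exact ⟨hqp, hdp ▸ hd₁p⟩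
        · rw [Function.update_of_ne hcb.ne']
          obtain ⟨h1, h2⟩ := hB b hcb hbl
          exact ⟨hqp.trans h1, h2⟩
      · intro x hx y hy hxy
        have hcy : c < y := hx.1.trans_lt hxy
        rw [Function.update_of_ne hcy.ne']
        rcases hx.1.eq_or_lt with rfl | hcx
        · rw [Function.update_self]
          exact (hB y hcy hy.2).1
        · rw [Function.update_of_ne hcx.ne']
          exact hmono ⟨hcx, hx.2⟩ ⟨hcy, hy.2⟩ hxy
    · rintro z ⟨hz, v, hzv⟩
      rw [hIoo] at hzv
      let g := partOfDegree (some (p, c)) (d₁ (some (p, c))) f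
      let u : ℂ := ∑ b ∈ Finset.Ioo c l, z (some (p, b)) * v b
      have hli : ∀ k : Fin n, (k : ℕ) < i → k ≠ l := fun k hk h => by subst h; omega
      have hp1 : row1 n ≠ p := ((row1_le q).trans_lt hqp).ne
      have hfun : (fun s : ℂ => eval (Function.update z (some (p, l)) s) g) = fun _ => 0 := by
        refine Continuous.ext_on (dense_compl_singleton u)
          ((MvPolynomial.continuous_eval g).comp (by fun_prop)) continuous_const fun s hs => ?_
        have hrow : ∀ a, ∑ b ∈ Finset.Ioo c l,
            Function.update z (some (p, l)) s (some (a, b)) * v b =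
            ∑ b ∈ Finset.Ioo c l, z (some (a, b)) * v b := fun a =>
          Finset.sum_congr rfl fun b hb => by
            simp [(Finset.mem_Ioo.mp hb).2.ne]
        refine eval_partOfDegree_eq_zero_of_vanishing (v := v) hil hcl hqp hpN hfree hmax hv
          (fun k hk => ?_) (fun a ha => ?_) ?_
        · simp [hli k hk, hz k hk]
        · rw [hrow, ← hzv a ha]
          simp [ha.ne']
        · rw [hrow, Function.update_self]
          exact hs
      have := congrFun hfun (z (some (p, l)))
      simpa using this

end Locus

section Reduction

variable {n : ℕ}

/-- A weight on the variables for which the diagonal term of each minor is the unique heaviest. -/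
def diagWeight : Option (Fin n × Fin n) → ℕ
  | none => 0
  | some (a, b) => a * (b + 1)

theorem sum_perm_mul_lt {j : ℕ} {B : Fin j → Fin n} (hB : StrictMono B) {τ : Equiv.Perm (Fin j)}
    (hτ : τ ≠ 1) : ∑ b, (B (τ b) : ℕ) * ((b : ℕ) + 1) < ∑ b, (B b : ℕ) * ((b : ℕ) + 1) := by
  have hmono : Monovary (fun b => (B b : ℕ)) (fun b : Fin j => (b : ℕ) + 1) := by
    intro a b hab
    have hab' : a < b := by rw [Fin.lt_def]; simpa using hab
    exact (hB hab').le
  refine (hmono.sum_comp_perm_mul_lt_sum_mul_iff (σ := τ)).mpr fun h => hτ ?_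
  have hτm : StrictMono τ := by
    refine Monotone.strictMono_of_injective (fun a b hab => ?_) τ.injective
    rcases hab.eq_or_lt with rfl | hab
    · exact le_rfl
    · have := h (i := a) (j := b) (by simpa using hab)
      exact hB.le_iff_le.mp this
  refine Equiv.ext fun a => ?_
  have h1 := congrArg (fun e : Fin j ≃o Fin j => e a)
    (Subsingleton.elim (hτm.orderIsoOfSurjective τ τ.surjective) (OrderIso.refl _))
  simpa using h1

/-- The column of `Fin n` with index `b : Fin j`, as it occurs in the definition of `Kt`. -/
def colIdx (n : ℕ) [NeZero n] {j : ℕ} (b : Fin j) : Fin n :=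
  ⟨(b : ℕ) % n, Nat.mod_lt _ (Nat.pos_of_ne_zero (NeZero.ne n))⟩

theorem colIdx_val [NeZero n] {j : ℕ} (hj : j ≤ n) (b : Fin j) : (colIdx n b : ℕ) = b :=
  Nat.mod_eq_of_lt (b.2.trans_le hj)

theorem prod_zz_eq_monomial {j : ℕ} (B C : Fin j → Fin n) :
    ∏ b, zz n (B b) (C b) = monomial (∑ b, Finsupp.single (some (B b, C b)) 1) (1 : ℂ) := by
  rw [monomial_sum_one]
  rfl

theorem weight_sum_single {j : ℕ} (B C : Fin j → Fin n) :
    Finsupp.weight diagWeight (∑ b, Finsupp.single (some (B b, C b)) 1) =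
      ∑ b, (B b : ℕ) * ((C b : ℕ) + 1) := by
  rw [map_sum]
  refine Finset.sum_congr rfl fun b _ => ?_
  rw [Finsupp.weight_single, one_smul]
  rfl

/-- Every monomial is congruent to a combination of standard ones. -/
theorem monomial_mem_standard_sup [NeZero n] (hn : 2 ≤ n) {i j : ℕ} (hj : j ≤ n) {l : Fin n}
    (hl : (l : ℕ) + 1 = j) (N : ℕ) : ∀ d : Option (Fin n × Fin n) →₀ ℕ,
    Finsupp.weight diagWeight d = N →
    monomial d (1 : ℂ) ∈ restrictSupport ℂ {d | IsStandard i l (row1 n) (row1 n) d} ⊔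
      (Jt n i + Kt n j).restrictScalars ℂ := by
  set G := restrictSupport ℂ {d | IsStandard i l (row1 n) (row1 n) d} ⊔
      (Jt n i + Kt n j).restrictScalars ℂ
  have hI : ∀ f ∈ Jt n i + Kt n j, f ∈ G := fun f hf => Submodule.mem_sup_right hf
  induction N using Nat.strong_induction_on with
  | _ N ih =>
  rintro d rfl
  have hlt : ∀ e, Finsupp.weight diagWeight e < Finsupp.weight diagWeight d →
      monomial e (1 : ℂ) ∈ G := fun e he => ih _ he e rfl
  by_cases hstd : IsStandard i l (row1 n) (row1 n) d
  · refine Submodule.mem_sup_left ((mem_restrictSupport_iff ℂ).mpr fun e he => ?_)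
    obtain rfl := Finset.mem_singleton.mp (support_monomial_subset he)
    exact hstd
  rw [IsStandard, not_and_or, not_not] at hstd
  rcases hstd with hbad | ⟨B, hB, hmono⟩
  · push Not at hbad
    obtain ⟨k, hk, hdk⟩ := hbad
    have hle : Finsupp.single (some (rowN n, k)) 1 ≤ d :=
      Finsupp.single_le_iff.mpr (Nat.one_le_iff_ne_zero.mpr hdk)
    obtain ⟨e, rfl⟩ := exists_add_of_le hle
    have hmem : (tt n * zz n (row1 n) k + zz n (rowN n) k) * monomial e (1 : ℂ) ∈ G :=
      hI _ (Ideal.mul_mem_right _ _ (Submodule.mem_sup_left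
        (Ideal.subset_span ⟨k, hk, rfl⟩)))
    have hother : tt n * zz n (row1 n) k * monomial e (1 : ℂ) ∈ G := by
      have : tt n * zz n (row1 n) k * monomial e (1 : ℂ) =
          monomial (Finsupp.single none 1 + Finsupp.single (some (row1 n, k)) 1 + e) 1 := by
        simp [tt, zz, X, monomial_mul]
      rw [this]
      refine hlt _ ?_
      simp only [map_add, Finsupp.weight_single, diagWeight, row1, rowN, one_smul]
      have : 0 < (n - 1) * ((k : ℕ) + 1) := Nat.mul_pos (by omega) (by omega)
      omega
    have heq : monomial (Finsupp.single (some (rowN n, k)) 1 + e) (1 : ℂ) =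
        (tt n * zz n (row1 n) k + zz n (rowN n) k) * monomial e (1 : ℂ) -
          tt n * zz n (row1 n) k * monomial e (1 : ℂ) := by
      have : monomial (Finsupp.single (some (rowN n, k)) 1 + e) (1 : ℂ) =
          zz n (rowN n) k * monomial e 1 := by simp [zz, X, monomial_mul]
      rw [this]; ring
    rw [heq]
    exact G.sub_mem hmem hother
  · let C : Fin j → Fin n := colIdx n
    have hCval : ∀ b, (C b : ℕ) = b := colIdx_val hj
    have hC : StrictMono C := fun a b hab => by
      rw [Fin.lt_def, hCval, hCval]; exact hab
    have hCl : ∀ b, C b ≤ l := fun b => by rw [Fin.le_def, hCval]; omega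
    have hBC : StrictMono (B ∘ C) := fun a b hab =>
      hmono ⟨row1_le _, hCl a⟩ ⟨row1_le _, hCl b⟩ (hC hab)
    have hle : ∑ b, Finsupp.single (some (B (C b), C b)) 1 ≤ d :=
      Finsupp.sum_single_one_le (x := fun b => some (B (C b), C b))
        (fun a b hab => hC.injective (Prod.ext_iff.mp (Option.some_injective _ hab)).2)
        fun b => (hB (C b) (row1_le _) (hCl b)).2
    obtain ⟨e, rfl⟩ := exists_add_of_le hle
    let M : Matrix (Fin j) (Fin j) (MvPolynomial (Option (Fin n × Fin n)) ℂ) :=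
      Matrix.of fun a b => zz n (B (C a)) (C b)
    have hmem : M.det * monomial e (1 : ℂ) ∈ G := by
      refine hI _ (Ideal.mul_mem_right _ _ (Submodule.mem_sup_right (Ideal.subset_span
        ⟨B ∘ C, hBC, fun a => ?_, rfl⟩)))
      have := (hB (C a) (row1_le _) (hCl a)).1
      rw [Fin.lt_def] at this
      simp only [Function.comp_apply]
      omega
    have hdet := M.det_apply'
    rw [← Finset.add_sum_erase _ _ (Finset.mem_univ (1 : Equiv.Perm (Fin j)))] at hdet
    have hterm : ∀ τ : Equiv.Perm (Fin j), (∏ b, M (τ b) b) =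
        monomial (∑ b, Finsupp.single (some (B (C (τ b)), C b)) 1) 1 := fun τ =>
      prod_zz_eq_monomial (fun b => B (C (τ b))) C
    have heq : monomial (∑ b, Finsupp.single (some (B (C b), C b)) 1 + e) (1 : ℂ) =
        M.det * monomial e (1 : ℂ) - ∑ τ ∈ Finset.univ.erase (1 : Equiv.Perm (Fin j)),
          ((Equiv.Perm.sign τ : ℤ) : ℂ) •
            monomial (∑ b, Finsupp.single (some (B (C (τ b)), C b)) 1 + e) (1 : ℂ) := by
      have hrest : ∀ τ ∈ Finset.univ.erase (1 : Equiv.Perm (Fin j)),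
          ((Equiv.Perm.sign τ : ℤ) : MvPolynomial (Option (Fin n × Fin n)) ℂ) *
              (∏ b, M (τ b) b) * monomial e (1 : ℂ) =
            ((Equiv.Perm.sign τ : ℤ) : ℂ) •
              monomial (∑ b, Finsupp.single (some (B (C (τ b)), C b)) 1 + e) (1 : ℂ) := by
        intro τ _
        rw [hterm, mul_assoc, monomial_mul, one_mul, smul_eq_C_mul, map_intCast]
      rw [hdet, add_mul, hterm, Finset.sum_mul, Finset.sum_congr rfl hrest, add_sub_cancel_right]
      simp [monomial_mul]
    rw [heq]
    refine G.sub_mem hmem (G.sum_mem fun τ hτ => G.smul_mem _ (hlt _ ?_))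
    rw [map_add, map_add, weight_sum_single (fun b => B (C (τ b))) C,
      weight_sum_single (fun b => B (C b)) C]
    simp only [hCval]
    exact Nat.add_lt_add_right (sum_perm_mul_lt hBC (Finset.ne_of_mem_erase hτ)) _

theorem exists_standard_sub_mem [NeZero n] (hn : 2 ≤ n) {i j : ℕ} (hj : j ≤ n) {l : Fin n}
    (hl : (l : ℕ) + 1 = j) (f : MvPolynomial (Option (Fin n × Fin n)) ℂ) :
    ∃ g : MvPolynomial (Option (Fin n × Fin n)) ℂ,
      (∀ d ∈ g.support, IsStandard i l (row1 n) (row1 n) d) ∧ f - g ∈ Jt n i + Kt n j := by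
  have hf : f ∈ restrictSupport ℂ {d | IsStandard i l (row1 n) (row1 n) d} ⊔
      (Jt n i + Kt n j).restrictScalars ℂ := by
    rw [f.as_sum]
    refine Submodule.sum_mem _ fun d _ => ?_
    rw [← mul_one (coeff d f), ← smul_eq_mul, ← smul_monomial]
    exact Submodule.smul_mem _ _ (monomial_mem_standard_sup hn hj hl _ d rfl)
  obtain ⟨g, hg, h, hh, rfl⟩ := Submodule.mem_sup.mp hf
  exact ⟨g, fun d hd => (mem_restrictSupport_iff ℂ).mp hg hd, by rwa [add_sub_cancel_left]⟩

end Reduction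

section Parametrization

variable {n : ℕ} [NeZero n]

/-- The substitution `z_{nk} ↦ - t z_{1k}` for `k ≤ i`. -/
noncomputable def paramBase (i : ℕ) : Option (Fin n × Fin n) →
    MvPolynomial (Option (Fin n × Fin n) ⊕ Fin n) ℂ
  | none => X (Sum.inl none)
  | some (a, b) =>
    if a = rowN n ∧ (b : ℕ) < i then - (X (Sum.inl none) * X (Sum.inl (some (row1 n, b))))
    else X (Sum.inl (some (a, b)))

/-- The parametrization of the locus by the free variables and the coefficients of the linear
relation among the columns. -/
noncomputable def param (i : ℕ) (l : Fin n) : Option (Fin n × Fin n) →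
    MvPolynomial (Option (Fin n × Fin n) ⊕ Fin n) ℂ
  | none => X (Sum.inl none)
  | some (a, b) =>
    if row1 n < a ∧ b = l then
      ∑ b' ∈ Finset.Ico (row1 n) l, paramBase i (some (a, b')) * X (Sum.inr b')
    else paramBase i (some (a, b))

theorem eval_param_mem_relLocus (hn : 2 ≤ n) {i : ℕ} {l : Fin n} (hil : i ≤ l)
    (w : Option (Fin n × Fin n) ⊕ Fin n → ℂ) :
    (fun s => eval w (param i l s)) ∈ relLocus i l (row1 n) (row1 n) := by
  refine ⟨fun k hk => ?_, fun b => w (Sum.inr b), fun a ha => ?_⟩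
  · have hkl : k ≠ l := fun h => by subst h; omega
    simp [param, paramBase, hkl, hk, (row1_lt_rowN hn).ne]
  · simp only [param, ha, true_and, if_true, map_sum, map_mul, eval_X]
    refine Finset.sum_congr rfl fun b hb => ?_
    rw [if_neg (Finset.mem_Ico.mp hb).2.ne]

theorem eval_param_of_mem_relLocus {i : ℕ} {l : Fin n}
    {z : Option (Fin n × Fin n) → ℂ} (hz : z ∈ relLocus i l (row1 n) (row1 n)) :
    ∃ w : Option (Fin n × Fin n) ⊕ Fin n → ℂ, (fun s => eval w (param i l s)) = z := by
  obtain ⟨hz, v, hv⟩ := hz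
  refine ⟨Sum.elim z v, ?_⟩
  have hbase : ∀ s, eval (Sum.elim z v) (paramBase i s) = z s := by
    rintro (_ | ⟨a, b⟩)
    · simp [paramBase]
    · by_cases h : a = rowN n ∧ (b : ℕ) < i
      · simp [paramBase, h, hz b h.2]
      · simp [paramBase, h]
  funext s
  rcases s with _ | ⟨a, b⟩
  · simp [param]
  · by_cases h : row1 n < a ∧ b = l
    · obtain ⟨ha, rfl⟩ := h
      simp [param, ha, hbase, hv a ha]
    · simp [param, h, hbase]

theorem mem_ker_aeval_param_iff (hn : 2 ≤ n) {i : ℕ} {l : Fin n} (hil : i ≤ l)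
    (f : MvPolynomial (Option (Fin n × Fin n)) ℂ) :
    f ∈ RingHom.ker (aeval (R := ℂ) (param i l)) ↔
      ∀ z ∈ relLocus i l (row1 n) (row1 n), eval z f = 0 := by
  have heval : ∀ w, eval w (aeval (R := ℂ) (param i l) f) =
      eval (fun s => eval w (param i l s)) f := by
    intro w
    rw [aeval_def, eval, coe_eval₂Hom, ← coe_eval₂Hom (RingHom.id ℂ) w, hom_eval₂]
    congr 1
    ext
    simp
  rw [RingHom.mem_ker]
  constructor
  · intro hf z hz
    obtain ⟨w, rfl⟩ := eval_param_of_mem_relLocus hz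
    rw [← heval, hf, map_zero]
  · intro h
    refine MvPolynomial.funext fun w => ?_
    rw [heval, h _ (eval_param_mem_relLocus hn hil w), map_zero]

theorem eval_minor_eq_zero {i j : ℕ} (hj : j ≤ n) {l : Fin n} (hl : (l : ℕ) + 1 = j)
    {z : Option (Fin n × Fin n) → ℂ} (hz : z ∈ relLocus i l (row1 n) (row1 n))
    {B : Fin j → Fin n} (hB : ∀ a, 1 ≤ (B a : ℕ)) :
    eval z (Matrix.det (Matrix.of fun a b : Fin j => zz n (B a) (colIdx n b))) = 0 := by
  obtain ⟨-, v, hv⟩ := hz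
  subst hl
  rw [RingHom.map_det]
  refine Matrix.exists_mulVec_eq_zero_iff.mp
    ⟨Fin.snoc (α := fun _ => ℂ) (fun b : Fin l => v ⟨b, b.2.trans l.2⟩) (-1), ?_, ?_⟩
  · intro h
    have := congrFun h (Fin.last l)
    simp at this
  · funext a
    have hlast : colIdx n (Fin.last (l : ℕ)) = l := Fin.ext (by rw [colIdx_val hj, Fin.val_last])
    have hsum : ∑ b ∈ Finset.Ico (row1 n) l, z (some (B a, b)) * v b =
        ∑ b : Fin l, z (some (B a, colIdx n b.castSucc)) * v ⟨b, b.2.trans l.2⟩ := by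
      have hcol : ∀ b : Fin l, colIdx n b.castSucc = ⟨b, b.2.trans l.2⟩ := fun b =>
        Fin.ext (by rw [colIdx_val hj, Fin.val_castSucc])
      simp only [hcol]
      refine (Finset.sum_bij (fun (b : Fin l) _ => (⟨b, b.2.trans l.2⟩ : Fin n)) ?_ ?_ ?_ ?_).symm
      · exact fun b _ => Finset.mem_Ico.mpr ⟨row1_le _, Fin.lt_def.mpr b.2⟩
      · intro b _ b' _ h
        exact Fin.ext (Fin.mk.inj h)
      · exact fun b hb => ⟨⟨b, Fin.lt_def.mp (Finset.mem_Ico.mp hb).2⟩, Finset.mem_univ _, rfl⟩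
      · exact fun b _ => rfl
    have hrow : row1 n < B a := by rw [Fin.lt_def]; exact hB a
    simp only [Matrix.mulVec, dotProduct, Fin.sum_univ_castSucc, Fin.snoc_castSucc, Fin.snoc_last,
      RingHom.mapMatrix_apply, Matrix.map_apply, Matrix.of_apply, zz, eval_X, hlast, Pi.zero_apply]
    rw [hv _ hrow, hsum]
    ring

theorem ker_aeval_param (hn : 2 ≤ n) {i j : ℕ} (hj : j ≤ n) {l : Fin n} (hil : i ≤ l)
    (hl : (l : ℕ) + 1 = j) :
    RingHom.ker (aeval (R := ℂ) (param i l)) = Jt n i + Kt n j := by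
  have hle : Jt n i + Kt n j ≤ RingHom.ker (aeval (R := ℂ) (param i l)) := by
    refine sup_le (Ideal.span_le.mpr ?_) (Ideal.span_le.mpr ?_)
    · rintro _ ⟨k, hk, rfl⟩
      refine (mem_ker_aeval_param_iff hn hil _).mpr fun z hz => ?_
      simp [tt, zz, hz.1 k hk]
    · rintro _ ⟨B, -, hB, rfl⟩
      exact (mem_ker_aeval_param_iff hn hil _).mpr fun z hz => eval_minor_eq_zero hj hl hz hB
  refine le_antisymm (fun f hf => ?_) hle
  obtain ⟨g, hg, hfg⟩ := exists_standard_sub_mem (i := i) hn hj hl f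
  have hg0 : g = 0 := by
    refine eq_zero_of_isStandard_of_vanishing hn hil l (row1 n) (row1 n) (by simp [row1]) g hg ?_
    refine (mem_ker_aeval_param_iff hn hil _).mp ?_
    simpa using Ideal.sub_mem _ hf (hle hfg)
  simpa [hg0] using hfg

end Parametrization

/-- For all `0 ≤ i < j ≤ n`, the ideal `J_i^t + K_j` of `ℂ[t, z_{11}, …, z_{nn}]`
is prime. -/
theorem Jt_add_Kt_isPrime (n : ℕ) [NeZero n] (hn : 2 ≤ n) (i j : ℕ)
    (hij : i < j) (hj : j ≤ n) : (Jt n i + Kt n j).IsPrime := by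
  rw [← ker_aeval_param hn hj (l := ⟨j - 1, by omega⟩) (Nat.le_sub_one_of_lt hij)
    (Nat.sub_add_cancel (by omega))]
  exact RingHom.ker_isPrime _
end

section
/- In C[t, z_{11}, ..., z_{nn}], for all 1 ≤ i ≤ j ≤ n the ideal J_i^t · K_j is radical; consequently J_i^t · K_j = J_i^t ∩ K_j. -/
open MvPolynomial

section FreeVariable

variable {τ : Type*}

/-- If `φ` fixes every variable modulo `J` and `f` vanishes at all points of the form
`p ∘ φ`, then `f ∈ J`. -/
lemma mem_of_vanishing_subst {J : Ideal (MvPolynomial τ ℂ)} (φ : τ → MvPolynomial τ ℂ)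
    (hφ : ∀ u, X u - φ u ∈ J) {f : MvPolynomial τ ℂ}
    (hf : ∀ p : τ → ℂ, eval (fun u => eval p (φ u)) f = 0) : f ∈ J := by
  have h1 : f - aeval φ f ∈ J := by
    rw [← Ideal.Quotient.eq]
    have : (Ideal.Quotient.mkₐ ℂ J) = (Ideal.Quotient.mkₐ ℂ J).comp (aeval φ) := by
      refine MvPolynomial.algHom_ext fun u => ?_
      simpa using Ideal.Quotient.eq.2 (hφ u)
    exact DFunLike.congr_fun this f
  have h2 : aeval φ f = 0 := by
    refine MvPolynomial.funext fun p => ?_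
    rw [map_zero, ← hf p, ← coe_aeval_eq_eval, ← coe_aeval_eq_eval]
    simp only [RingHom.coe_coe]
    rw [← AlgHom.comp_apply, comp_aeval]
  rwa [h2, sub_zero] at h1

variable [DecidableEq τ]

/-- The substitution `X y ↦ 0`. -/
noncomputable def setZero (y : τ) : MvPolynomial τ ℂ →ₐ[ℂ] MvPolynomial τ ℂ :=
  aeval (Function.update X y 0)

/-- The polynomial `f` does not involve the variable `y`. -/
def IsFreeOf (y : τ) (f : MvPolynomial τ ℂ) : Prop := setZero y f = f

lemma setZero_X_self (y : τ) : setZero y (X y) = 0 := by simp [setZero]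

lemma isFreeOf_X {y u : τ} (h : u ≠ y) : IsFreeOf y (X u) := by simp [IsFreeOf, setZero, h]

lemma isFreeOf_C (y : τ) (a : ℂ) : IsFreeOf y (C a) := by
  simp [IsFreeOf, setZero]

lemma IsFreeOf.zero (y : τ) : IsFreeOf y 0 := map_zero _

lemma IsFreeOf.one (y : τ) : IsFreeOf y 1 := map_one _

lemma IsFreeOf.add {y : τ} {f g : MvPolynomial τ ℂ} (hf : IsFreeOf y f) (hg : IsFreeOf y g) :
    IsFreeOf y (f + g) := by
  rw [IsFreeOf, map_add, hf, hg]

lemma IsFreeOf.neg {y : τ} {f : MvPolynomial τ ℂ} (hf : IsFreeOf y f) : IsFreeOf y (-f) := by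
  rw [IsFreeOf, map_neg, hf]

lemma IsFreeOf.mul {y : τ} {f g : MvPolynomial τ ℂ} (hf : IsFreeOf y f) (hg : IsFreeOf y g) :
    IsFreeOf y (f * g) := by
  rw [IsFreeOf, map_mul, hf, hg]

lemma IsFreeOf.sum {y : τ} {ι : Type*} {s : Finset ι} {f : ι → MvPolynomial τ ℂ}
    (hf : ∀ i ∈ s, IsFreeOf y (f i)) : IsFreeOf y (∑ i ∈ s, f i) := by
  rw [IsFreeOf, map_sum]
  exact Finset.sum_congr rfl hf

lemma IsFreeOf.det {y : τ} {k : ℕ} {M : Matrix (Fin k) (Fin k) (MvPolynomial τ ℂ)}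
    (hM : ∀ a b, IsFreeOf y (M a b)) : IsFreeOf y M.det := by
  rw [IsFreeOf, AlgHom.map_det]
  congr 1
  ext1 a b
  exact hM a b

lemma isFreeOf_setZero (y : τ) (f : MvPolynomial τ ℂ) : IsFreeOf y (setZero y f) := by
  have h : (setZero y).comp (setZero y) = setZero y := by
    refine MvPolynomial.algHom_ext fun u => ?_
    rcases eq_or_ne u y with rfl | hu
    · simp [setZero_X_self]
    · simp only [AlgHom.comp_apply]
      rw [isFreeOf_X hu, isFreeOf_X hu]
  exact DFunLike.congr_fun h f

lemma eval_setZero (y : τ) (p : τ → ℂ) (f : MvPolynomial τ ℂ) :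
    eval p (setZero y f) = eval (Function.update p y 0) f := by
  induction f using MvPolynomial.induction_on with
  | C a => simp [setZero]
  | add f g hf hg => simp [hf, hg]
  | mul_X f u hf =>
    rcases eq_or_ne u y with rfl | hu
    · simp [setZero_X_self]
    · rw [map_mul, isFreeOf_X hu]
      simp [hf, hu]

lemma IsFreeOf.eval_update {y : τ} {f : MvPolynomial τ ℂ} (hf : IsFreeOf y f) (p : τ → ℂ)
    (c : ℂ) : eval (Function.update p y c) f = eval p f := by
  rw [← hf, eval_setZero, eval_setZero, Function.update_idem]

lemma setZero_mem_span {y : τ} {T : Set (MvPolynomial τ ℂ)} (hT : ∀ g ∈ T, IsFreeOf y g)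
    {f : MvPolynomial τ ℂ} (hf : f ∈ Ideal.span T) : setZero y f ∈ Ideal.span T := by
  induction hf using Submodule.span_induction with
  | mem g hg => rw [hT g hg]; exact Ideal.subset_span hg
  | zero => simp
  | add f g _ _ hf hg => rw [map_add]; exact add_mem hf hg
  | smul r f _ hf => rw [smul_eq_mul, map_mul]; exact Ideal.mul_mem_left _ _ hf

/-- Elements of an ideal generated by polynomials free of `y` can be expanded in powers of `X y`,
with coefficients in the ideal and free of `y`. -/
lemma exists_expansion {y : τ} {T : Set (MvPolynomial τ ℂ)} (hT : ∀ g ∈ T, IsFreeOf y g)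
    {f : MvPolynomial τ ℂ} (hf : f ∈ Ideal.span T) :
    ∃ F : Polynomial (MvPolynomial τ ℂ),
      (∀ d, IsFreeOf y (F.coeff d) ∧ F.coeff d ∈ Ideal.span T) ∧ f = F.eval (X y) := by
  have aux : ∀ f : MvPolynomial τ ℂ, ∃ F : Polynomial (MvPolynomial τ ℂ),
      (∀ d, IsFreeOf y (F.coeff d)) ∧ f = F.eval (X y) := by
    intro f
    induction f using MvPolynomial.induction_on with
    | C a =>
      refine ⟨Polynomial.C (C a), fun d => ?_, by simp⟩
      rw [Polynomial.coeff_C]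
      split_ifs
      · exact isFreeOf_C y a
      · exact IsFreeOf.zero y
    | add f g hf hg =>
      obtain ⟨F, hF, rfl⟩ := hf
      obtain ⟨G, hG, rfl⟩ := hg
      refine ⟨F + G, fun d => ?_, by simp⟩
      rw [Polynomial.coeff_add]
      exact (hF d).add (hG d)
    | mul_X f u hf =>
      obtain ⟨F, hF, rfl⟩ := hf
      rcases eq_or_ne u y with rfl | hu
      · refine ⟨F * Polynomial.X, fun d => ?_, by simp⟩
        cases d with
        | zero => simpa using IsFreeOf.zero u
        | succ d => simpa using hF d
      · refine ⟨F * Polynomial.C (X u), fun d => ?_, by simp⟩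
        rw [Polynomial.coeff_mul_C]
        exact (hF d).mul (isFreeOf_X hu)
  induction hf using Submodule.span_induction with
  | mem g hg =>
    refine ⟨Polynomial.C g, fun d => ?_, by simp⟩
    rw [Polynomial.coeff_C]
    split_ifs
    · exact ⟨hT g hg, Ideal.subset_span hg⟩
    · exact ⟨IsFreeOf.zero y, zero_mem _⟩
  | zero => exact ⟨0, fun d => by simpa using IsFreeOf.zero y, by simp⟩
  | add f g _ _ hf hg =>
    obtain ⟨F, hF, rfl⟩ := hf
    obtain ⟨G, hG, rfl⟩ := hg
    refine ⟨F + G, fun d => ?_, by simp⟩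
    rw [Polynomial.coeff_add]
    exact ⟨(hF d).1.add (hG d).1, add_mem (hF d).2 (hG d).2⟩
  | smul r f _ hf =>
    obtain ⟨F, hF, rfl⟩ := hf
    obtain ⟨G, hG, rfl⟩ := aux r
    refine ⟨G * F, fun d => ?_, by simp⟩
    rw [Polynomial.coeff_mul]
    exact ⟨IsFreeOf.sum fun x _ => (hG _).mul (hF _).1,
      sum_mem fun x _ => Ideal.mul_mem_left _ _ (hF _).2⟩

/-- Induction on the degree in `X y`: to prove `I ≤ Q` it suffices to be able to cancel leading
coefficients modulo `Q`, and to treat the elements of `I` that are free of `y`. -/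
lemma le_of_leadingCoeff_reduction (y : τ) {T : Set (MvPolynomial τ ℂ)}
    (hT : ∀ g ∈ T, IsFreeOf y g) {I Q : Ideal (MvPolynomial τ ℂ)} (hQI : Q ≤ I)
    (hIT : I ≤ Ideal.span T)
    (hlead : ∀ (D : ℕ) (c : ℕ → MvPolynomial τ ℂ), (∀ d, IsFreeOf y (c d)) →
      (∀ d, c d ∈ Ideal.span T) → ∑ d ∈ Finset.range (D + 2), c d * X y ^ d ∈ I →
      ∃ q ∈ Q, ∃ r ∈ Ideal.span T, IsFreeOf y r ∧ c (D + 1) * X y = q + r)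
    (hfree : ∀ g ∈ I, IsFreeOf y g → g ∈ Q) : I ≤ Q := by
  have key : ∀ (D : ℕ) (c : ℕ → MvPolynomial τ ℂ), (∀ d, IsFreeOf y (c d)) →
      (∀ d, c d ∈ Ideal.span T) → ∑ d ∈ Finset.range D, c d * X y ^ d ∈ I →
      ∑ d ∈ Finset.range D, c d * X y ^ d ∈ Q := by
    intro D
    induction D with
    | zero => intro c _ _ _; simp
    | succ D ih =>
      intro c hc hcT hI
      cases D with
      | zero =>
        simp only [zero_add, Finset.range_one, Finset.sum_singleton, pow_zero, mul_one] at hI ⊢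
        exact hfree _ hI (hc 0)
      | succ D =>
        obtain ⟨q, hq, r, hrT, hr, h⟩ := hlead D c hc hcT hI
        have hsum : ∑ d ∈ Finset.range (D + 1 + 1), c d * X y ^ d =
            ∑ d ∈ Finset.range (D + 1), (Function.update c D (c D + r)) d * X y ^ d
              + q * X y ^ D := by
          rw [Finset.sum_range_succ, Finset.sum_range_succ, Finset.sum_range_succ]
          have h1 : ∀ d ∈ Finset.range D,
              (Function.update c D (c D + r)) d * X y ^ d = c d * X y ^ d := by
            intro d hd
            rw [Function.update_of_ne (Finset.mem_range.1 hd).ne]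
          rw [Finset.sum_congr rfl h1, Function.update_self]
          linear_combination X y ^ D * h
        have hq' : q * X y ^ D ∈ Q := Ideal.mul_mem_right _ _ hq
        rw [hsum] at hI ⊢
        refine add_mem (ih _ (fun d => ?_) (fun d => ?_) ?_) hq'
        · rcases eq_or_ne d D with rfl | hd
          · rw [Function.update_self]; exact (hc _).add hr
          · rw [Function.update_of_ne hd]; exact hc d
        · rcases eq_or_ne d D with rfl | hd
          · rw [Function.update_self]; exact add_mem (hcT _) hrT
          · rw [Function.update_of_ne hd]; exact hcT d
        · exact (Ideal.add_mem_iff_left _ (hQI hq')).1 hI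
  intro f hf
  obtain ⟨F, hF, rfl⟩ := exists_expansion hT (hIT hf)
  rw [Polynomial.eval_eq_sum_range] at hf ⊢
  exact key _ _ (fun d => (hF d).1) (fun d => (hF d).2) hf

lemma eq_zero_of_continuous_of_ne {g : ℂ → ℂ} (hg : Continuous g) (h : ∀ s, s ≠ 0 → g s = 0) :
    g 0 = 0 := by
  have := hg.ext_on (dense_compl_singleton (0 : ℂ)) continuous_const (g := fun _ => (0 : ℂ))
    (fun s hs => h s hs)
  exact congrFun this 0

/-- If a polynomial vanishes along a curve on which `y` has a simple pole at `0` (with residue `β`)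
while the other coordinates stay finite, then its leading coefficient in `y` vanishes at the
limit point, provided that `β ≠ 0`. -/
lemma eval_leadingCoeff_of_curve {y : τ} {D : ℕ} {c : ℕ → MvPolynomial τ ℂ}
    (hc : ∀ d, IsFreeOf y (c d)) {p : ℂ → τ → ℂ} (hp : Continuous p) {β : ℂ}
    (h : ∀ s, s ≠ 0 → eval (Function.update (p s) y (β / s))
      (∑ d ∈ Finset.range (D + 1), c d * X y ^ d) = 0) :
    eval (p 0) (c D) * β ^ D = 0 := by
  have hcont : Continuous fun s : ℂ =>
      ∑ d ∈ Finset.range (D + 1), eval (p s) (c d) * β ^ d * s ^ (D - d) := by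
    refine continuous_finsetSum _ fun d _ => ?_
    exact ((((c d).continuous_eval).comp hp).mul continuous_const).mul (continuous_pow _)
  have := eq_zero_of_continuous_of_ne hcont fun s hs => by
    have h1 := h s hs
    rw [map_sum] at h1
    have h2 : ∑ d ∈ Finset.range (D + 1), eval (p s) (c d) * β ^ d * s ^ (D - d) = s ^ D *
        ∑ d ∈ Finset.range (D + 1), eval (Function.update (p s) y (β / s)) (c d * X y ^ d) := by
      rw [Finset.mul_sum]
      refine Finset.sum_congr rfl fun d hd => ?_
      have hd' : D = (D - d) + d := by have := Finset.mem_range.1 hd; omega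
      rw [map_mul, (hc d).eval_update, map_pow, eval_X, Function.update_self, div_pow]
      conv_rhs => rw [hd', pow_add]
      field_simp
    rw [h2, h1, mul_zero]
  rw [Finset.sum_range_succ, Finset.sum_eq_zero] at this
  · simpa using this
  · intro d hd
    have := Finset.mem_range.1 hd
    rw [zero_pow (by omega), mul_zero]

end FreeVariable

section MaximalMinors

variable {τ : Type*}

/-- The ideal of maximal minors of the matrix of variables indexed by `e`. -/
noncomputable def minorIdeal {m j : ℕ} (e : Fin m → Fin j → τ) : Ideal (MvPolynomial τ ℂ) :=
  Ideal.span {f | ∃ B : Fin j → Fin m, StrictMono B ∧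
    f = Matrix.det (Matrix.of fun a b => X (e (B a) b))}

/-- The ideal of polynomials vanishing at all points where the columns of the matrix of variables
indexed by `e` are linearly dependent. -/
def dependentIdeal {m j : ℕ} (e : Fin m → Fin j → τ) : Ideal (MvPolynomial τ ℂ) where
  carrier := {f | ∀ (p : τ → ℂ) (v : Fin j → ℂ), v ≠ 0 →
    (∀ b, ∑ a, p (e b a) * v a = 0) → eval p f = 0}
  add_mem' hf hg p v hv h := by rw [map_add, hf p v hv h, hg p v hv h, add_zero]
  zero_mem' p v _ _ := map_zero _
  smul_mem' r f hf p v hv h := by rw [smul_eq_mul, map_mul, hf p v hv h, mul_zero]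

lemma minorIdeal_eq_top {m : ℕ} (e : Fin m → Fin 0 → τ) : minorIdeal e = ⊤ :=
  (Ideal.eq_top_iff_one _).2 (Ideal.subset_span ⟨Fin.elim0, fun a => a.elim0, by simp⟩)

lemma minorIdeal_le_dependentIdeal {m j : ℕ} (e : Fin m → Fin j → τ) :
    minorIdeal e ≤ dependentIdeal e := by
  refine Ideal.span_le.2 ?_
  rintro _ ⟨B, -, rfl⟩ p v hv h
  rw [RingHom.map_det]
  refine Matrix.exists_mulVec_eq_zero_iff.1 ⟨v, hv, ?_⟩
  ext a
  simpa [Matrix.mulVec, dotProduct] using h (B a)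

lemma isRadical_dependentIdeal {m j : ℕ} (e : Fin m → Fin j → τ) :
    (dependentIdeal e).IsRadical := by
  rintro f ⟨k, hk⟩ p v hv h
  have := hk p v hv h
  rw [map_pow] at this
  exact eq_zero_of_pow_eq_zero this

variable {m j : ℕ} {e : Fin (m + 1) → Fin (j + 1) → τ}

lemma minorIdeal_castSucc_le (e : Fin (m + 1) → Fin (j + 1) → τ) :
    minorIdeal (fun b a => e (Fin.castSucc b) a) ≤ minorIdeal e := by
  refine Ideal.span_mono ?_
  rintro _ ⟨B, hB, rfl⟩
  exact ⟨fun a => (B a).castSucc, fun a b hab => hB hab, rfl⟩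

variable [DecidableEq τ]

/-- A maximal minor of the submatrix without last row and column is the coefficient of the
corner variable in a maximal minor of the full matrix. -/
lemma exists_minor_extension (he : ∀ b a b' a', e b a = e b' a' → b = b' ∧ a = a')
    {B : Fin j → Fin m} (hB : StrictMono B) :
    ∃ q ∈ minorIdeal e, ∃ r, IsFreeOf (e (Fin.last m) (Fin.last j)) r ∧
      Matrix.det (Matrix.of fun a b => (X (e (B a).castSucc (Fin.castSucc b)) :
        MvPolynomial τ ℂ)) * X (e (Fin.last m) (Fin.last j)) = q + r := by
  set B' : Fin (j + 1) → Fin (m + 1) := Fin.snoc (fun a => (B a).castSucc) (Fin.last m) with hB'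
  have hlast : B' (Fin.last j) = Fin.last m := by simp [hB']
  have hcast : ∀ a : Fin j, B' a.castSucc = (B a).castSucc := by simp [hB']
  have hmono : StrictMono B' := by
    intro a b hab
    induction b using Fin.lastCases with
    | last =>
      induction a using Fin.lastCases with
      | last => exact absurd hab (lt_irrefl _)
      | cast a => rw [hlast, hcast]; exact Fin.castSucc_lt_last _
    | cast b =>
      induction a using Fin.lastCases with
      | last => exact absurd hab (not_lt.2 (Fin.le_last _))
      | cast a => rw [hcast, hcast]; exact hB hab
  refine ⟨Matrix.det (Matrix.of fun a b => X (e (B' a) b)),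
    Ideal.subset_span ⟨B', hmono, rfl⟩, ?_⟩
  rw [Matrix.det_succ_row _ (Fin.last j), Fin.sum_univ_castSucc]
  refine ⟨-∑ b : Fin j, (-1) ^ ((Fin.last j : ℕ) + (b.castSucc : ℕ)) *
    (Matrix.of fun a b => (X (e (B' a) b) : MvPolynomial τ ℂ)) (Fin.last j) b.castSucc *
    Matrix.det (Matrix.submatrix (Matrix.of fun a b => (X (e (B' a) b) : MvPolynomial τ ℂ))
      (Fin.last j).succAbove b.castSucc.succAbove), ?_, ?_⟩
  · refine (IsFreeOf.sum fun b _ => (IsFreeOf.mul ?_ ?_).mul (IsFreeOf.det fun a c => ?_)).neg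
    · simp [IsFreeOf]
    · refine isFreeOf_X fun h => ?_
      exact (Fin.castSucc_lt_last b).ne (he _ _ _ _ h).2
    · refine isFreeOf_X fun h => ?_
      have := (he _ _ _ _ h).1
      rw [Fin.succAbove_last, hcast] at this
      exact (Fin.castSucc_lt_last _).ne this
  · have : Matrix.submatrix (Matrix.of fun a b => (X (e (B' a) b) : MvPolynomial τ ℂ))
        (Fin.last j).succAbove (Fin.last j).succAbove =
        Matrix.of fun a b => X (e (B a).castSucc (Fin.castSucc b)) := by
      ext1 a b
      simp [Fin.succAbove_last, hcast]
    rw [this]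
    simp only [Fin.val_last, Matrix.of_apply, hlast, ← two_mul, pow_mul, neg_one_sq, one_pow]
    ring

lemma exists_minorIdeal_extension (he : ∀ b a b' a', e b a = e b' a' → b = b' ∧ a = a')
    {f : MvPolynomial τ ℂ}
    (hf : f ∈ minorIdeal (fun b a => e (Fin.castSucc b) (Fin.castSucc a))) :
    ∃ q ∈ minorIdeal e, ∃ r, IsFreeOf (e (Fin.last m) (Fin.last j)) r ∧
      setZero (e (Fin.last m) (Fin.last j)) f * X (e (Fin.last m) (Fin.last j)) = q + r := by
  set y := e (Fin.last m) (Fin.last j) with hy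
  induction hf using Submodule.span_induction with
  | mem g hg =>
    obtain ⟨B, hB, rfl⟩ := hg
    have hfree : IsFreeOf y (Matrix.det (Matrix.of fun a b =>
        (X (e (B a).castSucc (Fin.castSucc b)) : MvPolynomial τ ℂ))) :=
      IsFreeOf.det fun a b => isFreeOf_X fun h =>
        (Fin.castSucc_lt_last _).ne (he _ _ _ _ h).1
    rw [hfree]
    exact exists_minor_extension he hB
  | zero => exact ⟨0, zero_mem _, 0, IsFreeOf.zero y, by simp⟩
  | add f g _ _ hf hg =>
    obtain ⟨q, hq, r, hr, h⟩ := hf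
    obtain ⟨q', hq', r', hr', h'⟩ := hg
    refine ⟨q + q', add_mem hq hq', r + r', hr.add hr', ?_⟩
    rw [map_add]
    linear_combination h + h'
  | smul s f _ hf =>
    obtain ⟨q, hq, r, hr, h⟩ := hf
    refine ⟨setZero y s * q, Ideal.mul_mem_left _ _ hq, setZero y s * r,
      (isFreeOf_setZero y s).mul hr, ?_⟩
    rw [smul_eq_mul, map_mul]
    linear_combination setZero y s * h

/-- The leading coefficient, with respect to the corner variable, of a polynomial in
`dependentIdeal e` lies in the corresponding ideal of the matrix without last row and column. -/
lemma leadingCoeff_mem_dependentIdeal (he : ∀ b a b' a', e b a = e b' a' → b = b' ∧ a = a')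
    {D : ℕ} {c : ℕ → MvPolynomial τ ℂ}
    (hc : ∀ d, IsFreeOf (e (Fin.last m) (Fin.last j)) (c d))
    (h : ∑ d ∈ Finset.range (D + 1), c d * X (e (Fin.last m) (Fin.last j)) ^ d ∈
      dependentIdeal e) :
    c D ∈ dependentIdeal (fun b a => e (Fin.castSucc b) (Fin.castSucc a)) := by
  set y := e (Fin.last m) (Fin.last j) with hy
  have hey : ∀ b a, e b a = y ↔ b = Fin.last m ∧ a = Fin.last j := fun b a =>
    ⟨fun h => he _ _ _ _ h, fun h => by rw [h.1, h.2]⟩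
  have heq : ∀ b a b' a', e b a = e b' a' ↔ b = b' ∧ a = a' := fun b a b' a' =>
    ⟨fun h => he _ _ _ _ h, fun h => by rw [h.1, h.2]⟩
  intro p v hv hpv
  obtain ⟨a₀, ha₀⟩ := Function.ne_iff.1 hv
  rw [Pi.zero_apply] at ha₀
  have key : ∀ p : τ → ℂ, (∀ b : Fin m, ∑ a : Fin j, p (e b.castSucc a.castSucc) * v a = 0) →
      ∑ a : Fin j, p (e (Fin.last m) a.castSucc) * v a ≠ 0 → eval p (c D) = 0 := by
    intro p hp hβ
    set δ : τ → ℂ := fun u => ∑ b : Fin m, if e b.castSucc a₀.castSucc = u then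
      -(p (e b.castSucc (Fin.last j)) / v a₀) else 0 with hδ
    have hδ1 : ∀ (b : Fin m) (a : Fin j), δ (e b.castSucc a.castSucc) =
        if a = a₀ then -(p (e b.castSucc (Fin.last j)) / v a₀) else 0 := by
      intro b a
      simp only [hδ, heq, Fin.castSucc_inj]
      rw [Finset.sum_eq_single b]
      · simp [eq_comm]
      · intro b' _ hb'; simp [hb']
      · simp
    have hδ2 : ∀ b, δ (e b (Fin.last j)) = 0 := by
      intro b
      simp [hδ, heq, Fin.castSucc_ne_last]
    have hδ3 : ∀ a, δ (e (Fin.last m) a) = 0 := by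
      intro a
      simp [hδ, heq, Fin.castSucc_ne_last]
    have := eval_leadingCoeff_of_curve (y := y) (D := D) hc
      (p := fun s => p + s • δ) (by fun_prop)
      (β := -∑ a : Fin j, p (e (Fin.last m) a.castSucc) * v a) ?_
    · simpa [hβ] using this
    · intro s hs
      refine h _ (Fin.snoc v s : Fin (j + 1) → ℂ) (fun h0 => hs ?_) fun b => ?_
      · simpa using congrFun h0 (Fin.last j)
      · rw [Fin.sum_univ_castSucc]
        induction b using Fin.lastCases with
        | last =>
          simp only [Function.update_apply, hey, Fin.castSucc_ne_last, and_false, if_false,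
            Fin.snoc_castSucc, Fin.snoc_last, and_self, if_true, Pi.add_apply, Pi.smul_apply,
            hδ3, smul_zero, add_zero]
          field_simp
          simp
        | cast b =>
          simp only [Function.update_apply, hey, Fin.castSucc_ne_last, false_and, if_false,
            Fin.snoc_castSucc, Fin.snoc_last, Pi.add_apply, Pi.smul_apply,
            hδ1, hδ2, add_zero, add_mul, Finset.sum_add_distrib, hp, smul_eq_mul,
            mul_ite, ite_mul, mul_zero, zero_mul, Finset.sum_ite_eq', Finset.mem_univ]
          field_simp
          simp
  by_cases hβ : ∑ a : Fin j, p (e (Fin.last m) a.castSucc) * v a = 0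
  · set q : ℂ → τ → ℂ := fun s => p + s • Pi.single (e (Fin.last m) a₀.castSucc) 1 with hq
    have hq0 : q 0 = p := by simp [hq]
    rw [← hq0]
    refine eq_zero_of_continuous_of_ne (g := fun s => eval (q s) (c D))
      ((c D).continuous_eval.comp (by fun_prop)) fun s hs => key _ (fun b => ?_) ?_
    · simpa [hq, Pi.single_apply, heq, Fin.castSucc_ne_last] using hpv b
    · simp only [hq, Pi.add_apply, Pi.smul_apply, Pi.single_apply, heq, true_and,
        Fin.castSucc_inj, smul_eq_mul, add_mul, Finset.sum_add_distrib, hβ, mul_ite, ite_mul,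
        mul_one, mul_zero, zero_mul, Finset.sum_ite_eq', Finset.mem_univ, if_true, zero_add]
      exact mul_ne_zero hs ha₀
  · exact key p hpv hβ

lemma isFreeOf_mem_dependentIdeal (he : ∀ b a b' a', e b a = e b' a' → b = b' ∧ a = a')
    {f : MvPolynomial τ ℂ} (hf : IsFreeOf (e (Fin.last m) (Fin.last j)) f)
    (h : f ∈ dependentIdeal e) : f ∈ dependentIdeal (fun b a => e (Fin.castSucc b) a) := by
  intro p v hv hpv
  by_cases hvl : v (Fin.last j) = 0
  · have := leadingCoeff_mem_dependentIdeal (D := 0) (c := fun _ => f) he (fun _ => hf)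
      (by simpa using h)
    refine this p (fun a => v a.castSucc) (fun h0 => hv ?_) fun b => ?_
    · ext a
      induction a using Fin.lastCases with
      | last => exact hvl
      | cast a => exact congrFun h0 a
    · simpa [Fin.sum_univ_castSucc, hvl] using hpv b
  · rw [← hf.eval_update p
      (-(∑ a : Fin j, p (e (Fin.last m) a.castSucc) * v a.castSucc) / v (Fin.last j))]
    refine h _ v hv fun b => ?_
    have hey : ∀ b a, e b a = e (Fin.last m) (Fin.last j) ↔ b = Fin.last m ∧ a = Fin.last j :=
      fun b a => ⟨fun h => he _ _ _ _ h, fun h => by rw [h.1, h.2]⟩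
    induction b using Fin.lastCases with
    | last =>
      rw [Fin.sum_univ_castSucc]
      simp only [Function.update_apply, hey, Fin.castSucc_ne_last, and_false, if_false,
        if_true]
      field_simp
      simp
    | cast b =>
      simpa only [Function.update_apply, hey, Fin.castSucc_ne_last, false_and, if_false]
        using hpv b

/-- Inductive step, removing the last row and possibly the last column, for the inclusion
`L ⊓ dependentIdeal e ≤ L * minorIdeal e`. -/
lemma inf_dependentIdeal_le_step (he : ∀ b a b' a', e b a = e b' a' → b = b' ∧ a = a')
    {T : Set (MvPolynomial τ ℂ)} (hT : ∀ g ∈ T, IsFreeOf (e (Fin.last m) (Fin.last j)) g)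
    (hrow : Ideal.span T ⊓ dependentIdeal (fun b a => e (Fin.castSucc b) a) ≤
      Ideal.span T * minorIdeal (fun b a => e (Fin.castSucc b) a))
    (hcorner : Ideal.span T ⊓ dependentIdeal (fun b a => e (Fin.castSucc b) (Fin.castSucc a)) ≤
      Ideal.span T * minorIdeal (fun b a => e (Fin.castSucc b) (Fin.castSucc a))) :
    Ideal.span T ⊓ dependentIdeal e ≤ Ideal.span T * minorIdeal e := by
  set y := e (Fin.last m) (Fin.last j) with hy
  refine le_of_leadingCoeff_reduction y hT
    (Ideal.mul_le_inf.trans (inf_le_inf_left _ (minorIdeal_le_dependentIdeal e))) inf_le_left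
    (fun D c hc hcT hI => ?_) fun g hg hgy => ?_
  · have hmem := hcorner ⟨hcT (D + 1), leadingCoeff_mem_dependentIdeal he hc hI.2⟩
    suffices ∀ f ∈ Ideal.span T *
        minorIdeal (fun b a => e (Fin.castSucc b) (Fin.castSucc a)),
        ∃ q ∈ Ideal.span T * minorIdeal e, ∃ r ∈ Ideal.span T, IsFreeOf y r ∧
          setZero y f * X y = q + r by
      have h := this _ hmem
      rwa [hc (D + 1)] at h
    intro f hf
    induction hf using Submodule.mul_induction_on' with
    | mem_mul_mem l hl k hk =>
      obtain ⟨q, hq, r, hr, h⟩ := exists_minorIdeal_extension he hk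
      have hl' := setZero_mem_span hT hl
      refine ⟨setZero y l * q, Ideal.mul_mem_mul hl' hq, setZero y l * r,
        Ideal.mul_mem_right _ _ hl', (isFreeOf_setZero y l).mul hr, ?_⟩
      rw [map_mul]
      linear_combination setZero y l * h
    | add f _ g _ hf hg =>
      obtain ⟨q, hq, r, hrT, hr, h⟩ := hf
      obtain ⟨q', hq', r', hrT', hr', h'⟩ := hg
      refine ⟨q + q', add_mem hq hq', r + r', add_mem hrT hrT', hr.add hr', ?_⟩
      rw [map_add]
      linear_combination h + h'
  · exact Ideal.mul_mono_right (minorIdeal_castSucc_le e)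
      (hrow ⟨hg.1, isFreeOf_mem_dependentIdeal he hgy hg.2⟩)

theorem inf_dependentIdeal_le {T : Set (MvPolynomial τ ℂ)} {m j : ℕ} (e : Fin m → Fin j → τ)
    (he : ∀ b a b' a', e b a = e b' a' → b = b' ∧ a = a')
    (hT : ∀ g ∈ T, ∀ b a, IsFreeOf (e b a) g) :
    Ideal.span T ⊓ dependentIdeal e ≤ Ideal.span T * minorIdeal e := by
  induction m generalizing j with
  | zero =>
    cases j with
    | zero =>
      rw [minorIdeal_eq_top, Ideal.mul_top]
      exact inf_le_left
    | succ j =>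
      rintro f ⟨-, hf⟩
      have : f = 0 := MvPolynomial.funext fun p => by
        rw [map_zero]
        exact hf p 1 one_ne_zero fun b => b.elim0
      rw [this]
      exact zero_mem _
  | succ m ih =>
    cases j with
    | zero =>
      rw [minorIdeal_eq_top, Ideal.mul_top]
      exact inf_le_left
    | succ j =>
      refine inf_dependentIdeal_le_step he (fun g hg => hT g hg _ _)
        (ih _ (fun b a b' a' h => ?_) fun g hg b a => hT g hg _ _)
        (ih _ (fun b a b' a' h => ?_) fun g hg b a => hT g hg _ _)
      · simpa using he _ _ _ _ h
      · simpa using he _ _ _ _ h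

theorem dependentIdeal_eq_minorIdeal {m j : ℕ} (e : Fin m → Fin j → τ)
    (he : ∀ b a b' a', e b a = e b' a' → b = b' ∧ a = a') :
    dependentIdeal e = minorIdeal e := by
  refine le_antisymm ?_ (minorIdeal_le_dependentIdeal e)
  have := inf_dependentIdeal_le (T := {1}) e he (by rintro _ rfl b a; exact IsFreeOf.one _)
  simpa [Ideal.span_singleton_one] using this

end MaximalMinors

section Application

/-- The ideal generated by `ε t z_{1k} + z_{nk}` for the first `i` columns `k`; it interpolates
between `Jt n i` (at `ε = 1`) and an ideal of variables (at `ε = 0`). -/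
noncomputable def scaledJt (n : ℕ) [NeZero n] (ε : ℂ) (i : ℕ) :
    Ideal (MvPolynomial (Option (Fin n × Fin n)) ℂ) :=
  Ideal.span {f | ∃ k : Fin n, (k : ℕ) < i ∧
    f = C ε * (tt n * zz n (row1 n) k) + zz n (rowN n) k}

lemma scaledJt_one (n : ℕ) [NeZero n] (i : ℕ) : scaledJt n 1 i = Jt n i := by
  simp [scaledJt, Jt]

lemma row1_ne_rowN {n : ℕ} [NeZero n] (hn : 2 ≤ n) : row1 n ≠ rowN n := by
  simp only [row1, rowN, ne_eq, Fin.mk.injEq]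
  omega

lemma row1_ne_succ {m : ℕ} (b : Fin (m + 1)) : row1 (m + 2) ≠ b.succ :=
  (Fin.succ_ne_zero b).symm

lemma mem_scaledJt_iff {n : ℕ} [NeZero n] (hn : 2 ≤ n) {ε : ℂ} {i : ℕ}
    {f : MvPolynomial (Option (Fin n × Fin n)) ℂ} :
    f ∈ scaledJt n ε i ↔ ∀ p : Option (Fin n × Fin n) → ℂ,
      (∀ k : Fin n, (k : ℕ) < i →
        ε * (p none * p (some (row1 n, k))) + p (some (rowN n, k)) = 0) → eval p f = 0 := by
  constructor
  · intro hf p hp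
    have : scaledJt n ε i ≤ RingHom.ker (eval p) := by
      refine Ideal.span_le.2 ?_
      rintro _ ⟨k, hk, rfl⟩
      simpa [tt, zz, RingHom.mem_ker] using hp k hk
    exact this hf
  · intro h
    let φ : Option (Fin n × Fin n) → MvPolynomial (Option (Fin n × Fin n)) ℂ := fun u =>
      match u with
      | none => X none
      | some (r, k) => if r = rowN n ∧ (k : ℕ) < i then -(C ε * (tt n * zz n (row1 n) k))
          else X (some (r, k))
    refine mem_of_vanishing_subst φ (fun u => ?_) fun p => h _ fun k hk => ?_
    · rcases u with _ | ⟨r, k⟩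
      · simp [φ]
      · by_cases hrk : r = rowN n ∧ (k : ℕ) < i
        · simp only [φ, if_pos hrk]
          refine Ideal.subset_span ⟨k, hrk.2, ?_⟩
          rw [hrk.1, zz, zz]
          ring
        · simp [φ, if_neg hrk]
    · simp [φ, hk, row1_ne_rowN hn, tt, zz]

lemma isRadical_Jt {n : ℕ} [NeZero n] (hn : 2 ≤ n) (i : ℕ) : (Jt n i).IsRadical := by
  rw [← scaledJt_one]
  rintro f ⟨k, hk⟩
  rw [mem_scaledJt_iff hn] at hk ⊢
  intro p hp
  have := hk p hp
  rw [map_pow] at this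
  exact eq_zero_of_pow_eq_zero this

/-- The variables in the rows `2, …, n` and columns `1, …, j`. -/
def lowerVar (m j : ℕ) (b : Fin (m + 1)) (a : Fin j) : Option (Fin (m + 2) × Fin (m + 2)) :=
  some (b.succ, ⟨(a : ℕ) % (m + 2), Nat.mod_lt _ (Nat.succ_pos _)⟩)

lemma lowerVar_injective {m j : ℕ} (hj : j ≤ m + 2) (b : Fin (m + 1)) (a : Fin j)
    (b' : Fin (m + 1)) (a' : Fin j) (h : lowerVar m j b a = lowerVar m j b' a') :
    b = b' ∧ a = a' := by
  simp only [lowerVar, Option.some.injEq, Prod.mk.injEq, Fin.succ_inj, Fin.mk.injEq] at h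
  refine ⟨h.1, Fin.ext ?_⟩
  have h2 := h.2
  rwa [Nat.mod_eq_of_lt (by omega), Nat.mod_eq_of_lt (by omega)] at h2

lemma Kt_eq_minorIdeal (m j : ℕ) : Kt (m + 2) j = minorIdeal (lowerVar m j) := by
  refine congrArg Ideal.span (Set.ext fun f => ⟨?_, ?_⟩)
  · rintro ⟨B, hB, hB1, rfl⟩
    have h0 : ∀ a, B a ≠ 0 := fun a h => by simpa [h] using hB1 a
    refine ⟨fun a => (B a).pred (h0 a), fun a b hab => Fin.pred_lt_pred_iff.2 (hB hab), ?_⟩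
    simp [lowerVar, zz]
  · rintro ⟨B, hB, rfl⟩
    exact ⟨fun a => (B a).succ, fun a b hab => Fin.succ_lt_succ_iff.2 (hB hab),
      fun a => by simp, rfl⟩

lemma scaledJt_generator_isFreeOf {m : ℕ} (ε : ℂ) (k l : Fin (m + 2)) (b : Fin (m + 1))
    (h : b = Fin.last m → k ≠ l) :
    IsFreeOf (some (b.succ, l)) (C ε * (tt (m + 2) * zz (m + 2) (row1 (m + 2)) k) +
      zz (m + 2) (rowN (m + 2)) k) := by
  refine ((isFreeOf_C _ _).mul ((isFreeOf_X ?_).mul (isFreeOf_X ?_))).add (isFreeOf_X ?_)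
  · simp
  · simp [row1_ne_succ]
  · intro hb
    simp only [rowN, Option.some.injEq, Prod.mk.injEq, Fin.ext_iff, Fin.val_succ] at hb
    exact h (Fin.ext (by simp; omega)) (Fin.ext hb.2)

lemma scaledJt_inf_le {m j i : ℕ} (hj : j + 1 ≤ m + 2) (hi : i ≤ j) (ε : ℂ) :
    scaledJt (m + 2) ε i ⊓ minorIdeal (lowerVar m (j + 1)) ≤
      scaledJt (m + 2) ε i * minorIdeal (lowerVar m (j + 1)) := by
  have he := lowerVar_injective hj
  rw [← dependentIdeal_eq_minorIdeal _ he]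
  conv_rhs => rw [dependentIdeal_eq_minorIdeal _ he]
  refine inf_dependentIdeal_le_step he ?_ (inf_dependentIdeal_le _ ?_ ?_)
    (inf_dependentIdeal_le _ ?_ ?_)
  · rintro _ ⟨k, hk, rfl⟩
    refine scaledJt_generator_isFreeOf ε k _ _ fun _ h => ?_
    have hlast : (Fin.last j : ℕ) % (m + 2) = j := Nat.mod_eq_of_lt hj
    have hkj : (k : ℕ) = j := (congrArg Fin.val h).trans hlast
    omega
  · intro b a b' a' h
    simpa using he _ _ _ _ h
  · rintro _ ⟨k, hk, rfl⟩ b a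
    exact scaledJt_generator_isFreeOf ε k _ _ fun h => absurd h (Fin.castSucc_ne_last b)
  · intro b a b' a' h
    simpa using he _ _ _ _ h
  · rintro _ ⟨k, hk, rfl⟩ b a
    exact scaledJt_generator_isFreeOf ε k _ _ fun h => absurd h (Fin.castSucc_ne_last b)

lemma Jt_mono {n : ℕ} [NeZero n] {i i' : ℕ} (h : i ≤ i') : Jt n i ≤ Jt n i' :=
  Ideal.span_mono fun _ ⟨k, hk, hf⟩ => ⟨k, hk.trans_le h, hf⟩

lemma minorIdeal_generator_isFreeOf {m j : ℕ} {u : Option (Fin (m + 2) × Fin (m + 2))}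
    (hu : ∀ b a, lowerVar m j b a ≠ u) :
    ∀ g ∈ {f | ∃ B : Fin j → Fin (m + 1), StrictMono B ∧
      f = Matrix.det (Matrix.of fun a b => (X (lowerVar m j (B a) b) :
        MvPolynomial (Option (Fin (m + 2) × Fin (m + 2))) ℂ))}, IsFreeOf u g := by
  rintro _ ⟨B, -, rfl⟩
  exact IsFreeOf.det fun a b => isFreeOf_X (hu _ _)

/-- Elements of `K_{j+1}` that vanish where `t = z_{n1} = ⋯ = z_{nj} = 0`. -/
lemma mem_sup_of_vanishing {m j : ℕ} (hj : j + 1 ≤ m + 2)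
    {f : MvPolynomial (Option (Fin (m + 2) × Fin (m + 2))) ℂ}
    (hf : f ∈ minorIdeal (lowerVar m (j + 1)))
    (h : ∀ p : Option (Fin (m + 2) × Fin (m + 2)) → ℂ, p none = 0 →
      (∀ k : Fin (m + 2), (k : ℕ) < j → p (some (rowN (m + 2), k)) = 0) → eval p f = 0) :
    f ∈ Jt (m + 2) j * minorIdeal (lowerVar m (j + 1)) ⊔
      Ideal.span {tt (m + 2)} * minorIdeal (lowerVar m (j + 1)) := by
  have hT := minorIdeal_generator_isFreeOf (m := m) (j := j + 1) (u := none)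
    (by simp [lowerVar])
  have hdiff : f - setZero none f ∈ Ideal.span {tt (m + 2)} * minorIdeal (lowerVar m (j + 1)) := by
    obtain ⟨F, hF, rfl⟩ := exists_expansion hT hf
    rw [Polynomial.eval_eq_sum_range, map_sum, ← Finset.sum_sub_distrib]
    refine sum_mem fun d _ => ?_
    rw [map_mul, (hF d).1, map_pow, setZero_X_self]
    cases d with
    | zero => simp
    | succ d =>
      have : F.coeff (d + 1) * X none ^ (d + 1) - F.coeff (d + 1) * 0 ^ (d + 1) =
          tt (m + 2) * (F.coeff (d + 1) * X none ^ d) := by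
        rw [zero_pow d.succ_ne_zero, tt]
        ring
      rw [this]
      exact Ideal.mul_mem_mul (Ideal.mem_span_singleton_self _)
        (Ideal.mul_mem_right _ _ (hF _).2)
  have hzero : setZero none f ∈ scaledJt (m + 2) 0 j * minorIdeal (lowerVar m (j + 1)) := by
    refine scaledJt_inf_le hj le_rfl 0 ⟨?_, setZero_mem_span hT hf⟩
    refine (mem_scaledJt_iff (by omega)).2 fun p hp => ?_
    rw [eval_setZero]
    refine h _ (by simp) fun k hk => ?_
    simpa using hp k hk
  have hle : scaledJt (m + 2) 0 j ≤ Jt (m + 2) j ⊔ Ideal.span {tt (m + 2)} := by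
    refine Ideal.span_le.2 ?_
    rintro _ ⟨k, hk, rfl⟩
    have : C 0 * (tt (m + 2) * zz (m + 2) (row1 (m + 2)) k) + zz (m + 2) (rowN (m + 2)) k =
        (tt (m + 2) * zz (m + 2) (row1 (m + 2)) k + zz (m + 2) (rowN (m + 2)) k) +
          tt (m + 2) * (-zz (m + 2) (row1 (m + 2)) k) := by
      rw [C_0]
      ring
    rw [this]
    exact add_mem (Ideal.mem_sup_left (Ideal.subset_span ⟨k, hk, rfl⟩))
      (Ideal.mem_sup_right (Ideal.mul_mem_right _ _ (Ideal.mem_span_singleton_self _)))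
  have h1 := Ideal.mul_mono_left hle hzero
  rw [Ideal.sup_mul] at h1
  have h2 := add_mem (Ideal.mem_sup_right hdiff) h1
  rwa [sub_add_cancel] at h2

/-- The leading coefficient of an element of `J_{j+1}^t` with respect to `z_{1,j+1}` vanishes where
`t = z_{n1} = ⋯ = z_{nj} = 0`. -/
lemma eval_leadingCoeff_of_mem_Jt {m j : ℕ} (hj : j < m + 2) {D : ℕ}
    {c : ℕ → MvPolynomial (Option (Fin (m + 2) × Fin (m + 2))) ℂ}
    (hc : ∀ d, IsFreeOf (some (row1 (m + 2), (⟨j, hj⟩ : Fin (m + 2)))) (c d))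
    (h : ∑ d ∈ Finset.range (D + 1), c d * X (some (row1 (m + 2), (⟨j, hj⟩ : Fin (m + 2)))) ^ d ∈
      Jt (m + 2) (j + 1))
    {p : Option (Fin (m + 2) × Fin (m + 2)) → ℂ} (ht : p none = 0)
    (hp : ∀ k : Fin (m + 2), (k : ℕ) < j → p (some (rowN (m + 2), k)) = 0) :
    eval p (c D) = 0 := by
  have hne := row1_ne_rowN (n := m + 2) (by omega)
  set jj : Fin (m + 2) := ⟨j, hj⟩ with hjj
  rw [← scaledJt_one, mem_scaledJt_iff (by omega)] at h
  have key : ∀ p : Option (Fin (m + 2) × Fin (m + 2)) → ℂ, p none = 0 →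
      (∀ k : Fin (m + 2), (k : ℕ) < j → p (some (rowN (m + 2), k)) = 0) →
      p (some (rowN (m + 2), jj)) ≠ 0 → eval p (c D) = 0 := by
    intro p ht hp hy
    let δ : Option (Fin (m + 2) × Fin (m + 2)) → ℂ := fun u =>
      match u with
      | none => 1
      | some (r, k) => if r = rowN (m + 2) ∧ (k : ℕ) < j then -p (some (row1 (m + 2), k)) else 0
    have := eval_leadingCoeff_of_curve (D := D) hc (p := fun s => p + s • δ) (by fun_prop)
      (β := -p (some (rowN (m + 2), jj))) fun s hs => h _ fun k hk => ?_
    · simpa [hy] using this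
    · rcases eq_or_ne k jj with rfl | hkj
      · simp [hne.symm, δ, ht, jj]
        field_simp
        simp
      · have hk' : (k : ℕ) < j := by
          have : (k : ℕ) ≠ j := fun h => hkj (Fin.ext h)
          omega
        simp [hne, hne.symm, δ, ht, hkj, hk', hp]
  by_cases hy : p (some (rowN (m + 2), jj)) = 0
  · set q : ℂ → Option (Fin (m + 2) × Fin (m + 2)) → ℂ := fun s =>
      p + s • Pi.single (some (rowN (m + 2), jj)) 1 with hq
    have hq0 : q 0 = p := by simp [hq]
    rw [← hq0]
    refine eq_zero_of_continuous_of_ne (g := fun s => eval (q s) (c D))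
      ((c D).continuous_eval.comp (by fun_prop)) fun s hs => key _ ?_ (fun k hk => ?_) ?_
    · simp [hq, ht]
    · have : k ≠ jj := fun h => by simp [h, jj] at hk
      simp [hq, hp k hk, this]
    · simp [hq, hy, hs]
  · exact key p ht hp hy

lemma Jt_succ_inf_le {m j : ℕ} (hj : j + 1 ≤ m + 2) :
    Jt (m + 2) (j + 1) ⊓ minorIdeal (lowerVar m (j + 1)) ≤
      Jt (m + 2) (j + 1) * minorIdeal (lowerVar m (j + 1)) := by
  have hne := row1_ne_rowN (n := m + 2) (by omega)
  set jj : Fin (m + 2) := ⟨j, hj⟩ with hjj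
  set x : Option (Fin (m + 2) × Fin (m + 2)) := some (row1 (m + 2), jj) with hx
  set K := minorIdeal (lowerVar m (j + 1)) with hK
  have hKx := minorIdeal_generator_isFreeOf (m := m) (j := j + 1) (u := x)
    (by simp [lowerVar, hx, (row1_ne_succ _).symm])
  have hJx : ∀ g ∈ {f | ∃ k : Fin (m + 2), (k : ℕ) < j ∧
      f = tt (m + 2) * zz (m + 2) (row1 (m + 2)) k + zz (m + 2) (rowN (m + 2)) k},
      IsFreeOf x g := by
    rintro _ ⟨k, hk, rfl⟩
    refine ((isFreeOf_X ?_).mul (isFreeOf_X ?_)).add (isFreeOf_X ?_)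
    · simp [hx]
    · intro h
      simp only [hx, Option.some.injEq, Prod.mk.injEq, true_and] at h
      simp [h, hjj] at hk
    · simp [hx, hne.symm]
  refine le_of_leadingCoeff_reduction x hKx Ideal.mul_le_inf inf_le_right
    (fun D c hc hcK hI => ?_) fun g hg hgx => ?_
  · have hmem := mem_sup_of_vanishing hj (hcK (D + 1)) fun p ht hp =>
      eval_leadingCoeff_of_mem_Jt hj hc hI.1 ht hp
    rw [Submodule.mem_sup] at hmem
    obtain ⟨f, hf, g, hg, hfg⟩ := hmem
    obtain ⟨k, hk, rfl⟩ := Ideal.mem_span_singleton_mul.1 hg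
    have hf' : setZero x f ∈ Jt (m + 2) j * K := by
      clear hfg
      induction hf using Submodule.mul_induction_on' with
      | mem_mul_mem l hl k hk =>
        rw [map_mul]
        exact Ideal.mul_mem_mul (setZero_mem_span hJx hl) (setZero_mem_span hKx hk)
      | add f _ g _ hf hg => rw [map_add]; exact add_mem hf hg
    have hk' : setZero x k ∈ K := setZero_mem_span hKx hk
    have hcx : c (D + 1) = setZero x f + tt (m + 2) * setZero x k := by
      have ht : setZero x (tt (m + 2)) = tt (m + 2) := isFreeOf_X (by simp [hx])
      rw [← hc (D + 1), ← hfg, map_add, map_mul, ht]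
    refine ⟨setZero x f * X x + (tt (m + 2) * zz (m + 2) (row1 (m + 2)) jj +
      zz (m + 2) (rowN (m + 2)) jj) * setZero x k, add_mem (Ideal.mul_mem_right _ _
        (Ideal.mul_mono_left (Jt_mono j.le_succ) hf')) (Ideal.mul_mem_mul
        (Ideal.subset_span ⟨jj, j.lt_succ_self, rfl⟩) hk'),
      -zz (m + 2) (rowN (m + 2)) jj * setZero x k, Ideal.mul_mem_left _ _ hk',
      (isFreeOf_X ?_).neg.mul (isFreeOf_setZero x k), ?_⟩
    · simp [hx, hne.symm]
    · rw [hcx, zz, zz]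
      ring
  · refine Ideal.mul_mono_left (Jt_mono j.le_succ) ?_
    rw [← scaledJt_one]
    refine scaledJt_inf_le hj le_rfl 1 ⟨?_, hg.2⟩
    refine (mem_scaledJt_iff (by omega)).2 fun p hp => ?_
    by_cases ht : p none = 0
    · refine eval_leadingCoeff_of_mem_Jt hj (D := 0) (c := fun _ => g) (fun _ => hgx)
        (by simpa using hg.1) ht fun k hk => ?_
      simpa [ht] using hp k hk
    · rw [← hgx.eval_update p (-p (some (rowN (m + 2), jj)) / p none)]
      have hg1 : g ∈ Jt (m + 2) (j + 1) := hg.1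
      rw [← scaledJt_one, mem_scaledJt_iff (by omega)] at hg1
      refine hg1 _ fun k hk => ?_
      rcases eq_or_ne k jj with rfl | hkj
      · simp [hx, hne.symm]
        field_simp
        simp
      · have hk' : (k : ℕ) < j := by
          have : (k : ℕ) ≠ j := fun h => hkj (Fin.ext h)
          omega
        simpa [Function.update_apply, hx, hne.symm, hkj] using hp k hk'

end Application

/-- For all `1 ≤ i ≤ j ≤ n`, the product ideal `J_i^t · K_j` of
`ℂ[t, z_{11}, …, z_{nn}]` is radical; consequently `J_i^t · K_j = J_i^t ∩ K_j`. -/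
theorem Jt_mul_Kt_isRadical (n : ℕ) [NeZero n] (hn : 2 ≤ n) (i j : ℕ)
    (hi : 1 ≤ i) (hij : i ≤ j) (hj : j ≤ n) :
    (Jt n i * Kt n j).IsRadical ∧ Jt n i * Kt n j = Jt n i ⊓ Kt n j := by
  obtain ⟨m, rfl⟩ : ∃ m, n = m + 2 := ⟨n - 2, by omega⟩
  obtain ⟨l, rfl⟩ : ∃ l, j = l + 1 := ⟨j - 1, by omega⟩
  have hK : (Kt (m + 2) (l + 1)).IsRadical := by
    rw [Kt_eq_minorIdeal, ← dependentIdeal_eq_minorIdeal _ (lowerVar_injective hj)]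
    exact isRadical_dependentIdeal _
  have heq : Jt (m + 2) i * Kt (m + 2) (l + 1) = Jt (m + 2) i ⊓ Kt (m + 2) (l + 1) := by
    refine le_antisymm Ideal.mul_le_inf ?_
    rw [Kt_eq_minorIdeal]
    rcases hij.lt_or_eq with hlt | rfl
    · rw [← scaledJt_one]
      exact scaledJt_inf_le hj (Nat.lt_succ_iff.1 hlt) 1
    · exact Jt_succ_inf_le hj
  exact ⟨heq ▸ (isRadical_Jt hn i).inf hK, heq⟩
end

section
/- In C[z_{11}, ..., z_{nn}], for all 1 ≤ i < j ≤ n, the product ideal J_i^0 · K_j equals the intersection J_i^0 ∩ K_j, where J_i^0 = ⟨z_{n1}, ..., z_{ni}⟩ and K_j is generated by the j×j minors p_B for B ⊆ {2,...,n}, |B| = j. -/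
open MvPolynomial

/-- The variable `z_{ij}` in `ℂ[z_{ij} : 1 ≤ i, j ≤ n]` (`0`-based indexing). -/
noncomputable def z0 (n : ℕ) (i j : Fin n) : MvPolynomial (Fin n × Fin n) ℂ := X (i, j)

/-- The ideal `J_i^0 = ⟨z_{n1}, …, z_{ni}⟩`. -/
noncomputable def J0 (n : ℕ) [NeZero n] (i : ℕ) : Ideal (MvPolynomial (Fin n × Fin n) ℂ) :=
  Ideal.span {f | ∃ k : Fin n, (k : ℕ) < i ∧ f = z0 n (rowN n) k}

/-- The ideal `K_j`, generated by the `j × j` minors `p_B` of `(z_{kℓ})` with row set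
`B ⊆ {2, …, n}`, `|B| = j`, and columns `1, …, j` (for `j ≤ n` the column index
`b % n` is just `b`; `K_n = 0` since no admissible `B` exists). -/
noncomputable def K0 (n : ℕ) [NeZero n] (j : ℕ) : Ideal (MvPolynomial (Fin n × Fin n) ℂ) :=
  Ideal.span {f | ∃ B : Fin j → Fin n, StrictMono B ∧ (∀ a, 1 ≤ (B a : ℕ)) ∧
    f = Matrix.det (Matrix.of fun a b : Fin j =>
      z0 n (B a) ⟨(b : ℕ) % n, Nat.mod_lt _ (Nat.pos_of_ne_zero (NeZero.ne n))⟩)}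

namespace ColumnMinor

variable {n j : ℕ}

/-- The minor with rows `B` and columns `c` of the generic `n × n` matrix. -/
noncomputable def minor (c B : Fin j → Fin n) : MvPolynomial (Fin n × Fin n) ℂ :=
  Matrix.det (Matrix.of fun a b : Fin j => X (B a, c b))

/-- The exponent of the monomial indexed by `σ` in the Leibniz expansion of `minor c B`. -/
noncomputable def termExp (c B : Fin j → Fin n) (σ : Equiv.Perm (Fin j)) : Fin n × Fin n →₀ ℕ :=
  ∑ a, Finsupp.single (B (σ a), c a) 1

/-- The weight that gives `z_{kℓ}` degree `k * ℓ`; it makes the diagonal term of a minor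
dominant. -/
noncomputable def wt : (Fin n × Fin n →₀ ℕ) →+ ℕ :=
  Finsupp.weight fun q : Fin n × Fin n => (q.1 : ℕ) * (q.2 : ℕ)

/-- The row sets allowed in the generators of `K0`. -/
def IsRowSet (B : Fin j → Fin n) : Prop := StrictMono B ∧ ∀ a, 1 ≤ (B a : ℕ)

/-- The product of the monomial `M` and the minor on rows `B` is standard if no row `B k` can be
lowered to a row `r` with `z_{r k} ∣ M` while keeping `B` increasing up to position `k`. -/
def IsStandard (c : Fin j → Fin n) (M : Fin n × Fin n →₀ ℕ) (B : Fin j → Fin n) : Prop :=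
  ∀ (k : Fin j) (r : Fin n), 1 ≤ (r : ℕ) → r < B k → (∀ a < k, B a < r) → M (r, c k) = 0

theorem wt_single (r s : Fin n) : wt (Finsupp.single (r, s) 1) = (r : ℕ) * s := by
  simp [wt, Finsupp.weight_single]

theorem wt_termExp {c : Fin j → Fin n} (hc : ∀ b, (c b : ℕ) = b) (B : Fin j → Fin n)
    (σ : Equiv.Perm (Fin j)) : wt (termExp c B σ) = ∑ a, (B (σ a) : ℕ) * a := by
  simp [termExp, map_sum, wt_single, hc]

theorem wt_termExp_lt {c : Fin j → Fin n} (hc : ∀ b, (c b : ℕ) = b) {B : Fin j → Fin n}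
    (hB : StrictMono B) {σ : Equiv.Perm (Fin j)} (hσ : σ ≠ 1) :
    wt (termExp c B σ) < wt (termExp c B 1) := by
  rw [wt_termExp hc, wt_termExp hc]
  have hmono : Monovary (fun a => ((B a : ℕ) : ℤ)) (fun a : Fin j => ((a : ℕ) : ℤ)) := by
    intro a b hab
    have hab' : a < b := by simpa using hab
    simpa using hB.monotone hab'.le
  have key := (hmono.sum_comp_perm_mul_lt_sum_mul_iff (σ := σ)).2 fun h => hσ <| by
    have hs : StrictMono σ := by
      intro a b hab
      have h1 : B (σ a) ≤ B (σ b) := by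
        simpa using h (show ((a : ℕ) : ℤ) < ((b : ℕ) : ℤ) by simpa using hab)
      exact lt_of_le_of_ne (hB.le_iff_le.1 h1) fun e => hab.ne (σ.injective e)
    have := Subsingleton.elim (hs.orderIsoOfSurjective σ σ.surjective) (OrderIso.refl _)
    ext1 a
    exact DFunLike.congr_fun this a
  exact_mod_cast key

theorem monomial_mul_minor (c : Fin j → Fin n) (M : Fin n × Fin n →₀ ℕ) (B : Fin j → Fin n) :
    monomial M 1 * minor c B =
      ∑ σ : Equiv.Perm (Fin j), monomial (M + termExp c B σ) (((Equiv.Perm.sign σ : ℤ) : ℂ)) := by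
  rw [minor, Matrix.det_apply, Finset.mul_sum]
  refine Finset.sum_congr rfl fun σ _ => ?_
  have hprod : ∏ a, (Matrix.of fun a b : Fin j => (X (B a, c b) : MvPolynomial _ ℂ)) (σ a) a =
      monomial (termExp c B σ) 1 := by
    simp only [Matrix.of_apply, X, termExp]
    rw [monomial_sum_one]
  rw [hprod, Units.smul_def, zsmul_eq_mul, ← map_intCast (C : ℂ →+* _), C_mul_monomial,
    monomial_mul]
  simp

theorem exists_of_coeff_ne_zero {c : Fin j → Fin n} {M m : Fin n × Fin n →₀ ℕ}
    {B : Fin j → Fin n} (h : coeff m (monomial M 1 * minor c B) ≠ 0) :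
    ∃ σ, M + termExp c B σ = m := by
  rw [monomial_mul_minor, coeff_sum] at h
  obtain ⟨σ, -, hσ⟩ := Finset.exists_ne_zero_of_sum_ne_zero h
  rw [coeff_monomial] at hσ
  exact ⟨σ, by_contra fun hne => hσ (if_neg hne)⟩

theorem coeff_diagonal {c : Fin j → Fin n} (hc : ∀ b, (c b : ℕ) = b) (M : Fin n × Fin n →₀ ℕ)
    {B : Fin j → Fin n} (hB : StrictMono B) :
    coeff (M + termExp c B 1) (monomial M 1 * minor c B) = 1 := by
  rw [monomial_mul_minor, coeff_sum, Finset.sum_eq_single 1]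
  · simp
  · intro σ _ hσ
    rw [coeff_monomial, if_neg]
    intro h
    have := wt_termExp_lt hc hB hσ
    rw [add_left_cancel h] at this
    exact lt_irrefl _ this
  · simp

/-- Expanding a determinant with a repeated column gives a linear relation between the maximal
minors of a matrix with one more row. -/
theorem sum_minor_succAbove (c : Fin j → Fin n) (k : Fin j) (A : Fin (j + 1) → Fin n) :
    ∑ l : Fin (j + 1), (-1 : MvPolynomial (Fin n × Fin n) ℂ) ^ (l : ℕ) * X (A l, c k) *
      minor c (A ∘ l.succAbove) = 0 := by
  let N : Matrix (Fin (j + 1)) (Fin (j + 1)) (MvPolynomial (Fin n × Fin n) ℂ) :=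
    Matrix.of fun l => Fin.cons (X (A l, c k)) fun b => X (A l, c b)
  have h0 : N.det = 0 :=
    Matrix.det_zero_of_column_eq (Fin.succ_ne_zero k).symm (by intro l; simp [N])
  rw [Matrix.det_succ_column_zero] at h0
  rw [← h0]
  refine Finset.sum_congr rfl fun l _ => ?_
  simp only [minor, N, Matrix.of_apply, Fin.cons_zero]
  congr 2

/-- The weight of the `l`-th diagonal term in `sum_minor_succAbove`. -/
def relWt (A : Fin (j + 1) → Fin n) (k : Fin j) (l : Fin (j + 1)) : ℕ :=
  (A l : ℕ) * k + ∑ a, (A (l.succAbove a) : ℕ) * a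

theorem relWt_succ_add (A : Fin (j + 1) → Fin n) (k l : Fin j) :
    relWt A k l.succ + ((A l.succ : ℕ) * l + (A l.castSucc : ℕ) * k) =
      relWt A k l.castSucc + ((A l.castSucc : ℕ) * l + (A l.succ : ℕ) * k) := by
  unfold relWt
  rw [← Finset.add_sum_erase _ _ (Finset.mem_univ l),
    ← Finset.add_sum_erase Finset.univ (fun a => (A (l.castSucc.succAbove a) : ℕ) * a)
      (Finset.mem_univ l)]
  have : ∑ a ∈ Finset.univ.erase l, (A (l.succ.succAbove a) : ℕ) * a =
      ∑ a ∈ Finset.univ.erase l, (A (l.castSucc.succAbove a) : ℕ) * a := by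
    refine Finset.sum_congr rfl fun a ha => ?_
    rcases lt_or_gt_of_ne (Finset.ne_of_mem_erase ha) with h | h
    · rw [Fin.succAbove_succ_of_le _ _ h.le, Fin.succAbove_castSucc_of_lt _ _ h]
    · rw [Fin.succAbove_succ_of_lt _ _ h, Fin.succAbove_castSucc_of_le _ _ h.le]
  rw [this, Fin.succAbove_succ_self, Fin.succAbove_castSucc_self]
  ring

theorem relWt_succ_self (A : Fin (j + 1) → Fin n) (k : Fin j) :
    relWt A k k.succ = relWt A k k.castSucc := by
  have := relWt_succ_add A k k
  omega

theorem relWt_lt_of_lt {A : Fin (j + 1) → Fin n} (hA : StrictMono A) {k l : Fin j} (h : l < k) :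
    relWt A k l.castSucc < relWt A k l.succ := by
  have h1 := relWt_succ_add A k l
  have h2 : (A l.castSucc : ℕ) < A l.succ := hA Fin.castSucc_lt_succ
  have h3 : (l : ℕ) < k := h
  nlinarith

theorem relWt_lt_of_gt {A : Fin (j + 1) → Fin n} (hA : StrictMono A) {k l : Fin j} (h : k < l) :
    relWt A k l.succ < relWt A k l.castSucc := by
  have h1 := relWt_succ_add A k l
  have h2 : (A l.castSucc : ℕ) < A l.succ := hA Fin.castSucc_lt_succ
  have h3 : (k : ℕ) < l := h
  nlinarith

theorem relWt_lt {A : Fin (j + 1) → Fin n} (hA : StrictMono A) {k : Fin j} {l : Fin (j + 1)}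
    (h1 : l ≠ k.castSucc) (h2 : l ≠ k.succ) : relWt A k l < relWt A k k.castSucc := by
  rcases lt_or_gt_of_ne h1 with h | h
  · have key : ∀ m : Fin (j + 1), m ≤ k.castSucc → l < m → relWt A k l < relWt A k m := by
      intro m
      induction m using Fin.induction with
      | zero => intro _ hm; exact absurd hm (Fin.not_lt_zero _)
      | succ m ih =>
        intro hm hl
        have hmk : m < k := by
          have : (m : ℕ) + 1 ≤ k := hm
          exact Nat.lt_of_succ_le this
        rcases (Fin.le_castSucc_iff.2 hl).eq_or_lt with rfl | hlt
        · exact relWt_lt_of_lt hA hmk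
        · exact (ih (Fin.castSucc_le_castSucc_iff.2 hmk.le) hlt).trans (relWt_lt_of_lt hA hmk)
    exact key _ le_rfl h
  · rw [← relWt_succ_self]
    have key : ∀ m : Fin (j + 1), k.succ < m → relWt A k m < relWt A k k.succ := by
      intro m
      induction m using Fin.induction with
      | zero => intro hm; exact absurd hm (Fin.not_lt_zero _)
      | succ m ih =>
        intro hm
        have hkm : k < m := Fin.succ_lt_succ_iff.1 hm
        rcases (Fin.castSucc_lt_iff_succ_le.1 (Fin.castSucc_lt_castSucc_iff.2 hkm)).eq_or_lt with
          he | hlt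
        · rw [he]; exact relWt_lt_of_gt hA hkm
        · exact (relWt_lt_of_gt hA hkm).trans (ih hlt)
    exact key _ (lt_of_le_of_ne (Fin.castSucc_lt_iff_succ_le.1 h) h2.symm)

theorem wt_relation_term {c : Fin j → Fin n} (hc : ∀ b, (c b : ℕ) = b)
    (M : Fin n × Fin n →₀ ℕ) (A : Fin (j + 1) → Fin n) (k : Fin j) (l : Fin (j + 1)) :
    wt (M + Finsupp.single (A l, c k) 1 + termExp c (A ∘ l.succAbove) 1) =
      wt M + relWt A k l := by
  simp [map_add, wt_single, wt_termExp hc, relWt, hc, add_assoc]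

theorem strictMono_insertNth {B : Fin j → Fin n} (hB : StrictMono B) {k : Fin j} {r : Fin n}
    (hr : r < B k) (hlt : ∀ a < k, B a < r) :
    StrictMono (Fin.insertNth k.castSucc r B : Fin (j + 1) → Fin n) := by
  intro x y hxy
  rcases Fin.eq_self_or_eq_succAbove k.castSucc x with rfl | ⟨a, rfl⟩ <;>
  rcases Fin.eq_self_or_eq_succAbove k.castSucc y with rfl | ⟨b, rfl⟩
  · exact absurd hxy (lt_irrefl _)
  · rw [Fin.lt_succAbove_iff_le_castSucc, Fin.castSucc_le_castSucc_iff] at hxy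
    simpa using hr.trans_le (hB.monotone hxy)
  · rw [Fin.succAbove_lt_iff_castSucc_lt, Fin.castSucc_lt_castSucc_iff] at hxy
    simpa using hlt a hxy
  · simpa using hB ((Fin.strictMono_succAbove _).lt_iff_lt.1 hxy)

/-- Products of a monomial and a minor are combinations of standard ones. -/
theorem monomial_mul_minor_mem {c : Fin j → Fin n} (hc : ∀ b, (c b : ℕ) = b)
    {S : Submodule ℂ (MvPolynomial (Fin n × Fin n) ℂ)}
    (hS : ∀ M B, IsRowSet B → IsStandard c M B → monomial M 1 * minor c B ∈ S)
    (M : Fin n × Fin n →₀ ℕ) (B : Fin j → Fin n) (hB : IsRowSet B) :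
    monomial M 1 * minor c B ∈ S := by
  induction hw : wt (M + termExp c B 1) using Nat.strong_induction_on generalizing M B with
  | _ w ihw =>
  induction hs : ∑ a, (B a : ℕ) using Nat.strong_induction_on generalizing M B with
  | _ s ihs =>
  by_cases hstd : IsStandard c M B
  · exact hS M B hB hstd
  unfold IsStandard at hstd
  push Not at hstd
  obtain ⟨k, r, hr1, hrk, hlt, hM⟩ := hstd
  let A : Fin (j + 1) → Fin n := Fin.insertNth k.castSucc r B
  have hA : StrictMono A := strictMono_insertNth hB.1 hrk hlt
  have hAB : A ∘ k.castSucc.succAbove = B := by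
    ext a
    simp [A]
  have hAr : A k.castSucc = r := by simp [A]
  have hA1 : ∀ l, 1 ≤ (A l : ℕ) := by
    intro l
    rcases Fin.eq_self_or_eq_succAbove k.castSucc l with rfl | ⟨a, rfl⟩
    · rwa [hAr]
    · simpa [A] using hB.2 a
  obtain ⟨M', rfl⟩ : ∃ M', M = M' + Finsupp.single (r, c k) 1 :=
    ⟨M - Finsupp.single (r, c k) 1, (tsub_add_cancel_of_le (by
      rw [Finsupp.single_le_iff]; omega)).symm⟩
  have hwl : wt M' + relWt A k k.castSucc = w := by
    rw [← wt_relation_term hc, hAB, hAr, hw]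
  have hmem : ∀ l, l ≠ k.castSucc →
      monomial (M' + Finsupp.single (A l, c k) 1) 1 * minor c (A ∘ l.succAbove) ∈ S := by
    intro l hl
    have hrow : IsRowSet (A ∘ l.succAbove) :=
      ⟨hA.comp (Fin.strictMono_succAbove l), fun a => hA1 _⟩
    by_cases hl2 : l = k.succ
    · refine ihs _ ?_ _ _ hrow ?_ rfl
      · have h1 := Fin.sum_univ_succAbove (fun t => (A t : ℕ)) k.succ
        have h2 := Fin.sum_univ_succAbove (fun t => (A t : ℕ)) k.castSucc
        have h3 : (A k.castSucc : ℕ) < A k.succ := hA Fin.castSucc_lt_succ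
        have h4 : ∑ a, (A (k.castSucc.succAbove a) : ℕ) = s := by
          rw [← hs, ← hAB]; rfl
        rw [hl2]
        simp only [Function.comp_apply]
        omega
      · rw [wt_relation_term hc, hl2, relWt_succ_self, hwl]
    · refine ihw _ ?_ _ _ hrow rfl
      rw [wt_relation_term hc, ← hwl]
      exact Nat.add_lt_add_left (relWt_lt hA hl hl2) _
  have hrel := congrArg (monomial M' 1 * ·) (sum_minor_succAbove c k A)
  simp only [mul_zero, Finset.mul_sum] at hrel
  have hterm : ∀ l : Fin (j + 1), monomial M' (1 : ℂ) *
      ((-1) ^ (l : ℕ) * X (A l, c k) * minor c (A ∘ l.succAbove)) =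
      ((-1 : ℂ) ^ (l : ℕ)) • (monomial (M' + Finsupp.single (A l, c k) 1) 1 *
        minor c (A ∘ l.succAbove)) := by
    intro l
    have : monomial (M' + Finsupp.single (A l, c k) 1) (1 : ℂ) =
        monomial M' 1 * X (A l, c k) := by
      rw [X, monomial_mul, one_mul]
    rw [this, smul_eq_C_mul]
    simp only [map_pow, map_neg, map_one]
    ring
  simp only [hterm] at hrel
  rw [← Finset.add_sum_erase _ _ (Finset.mem_univ k.castSucc), hAB, hAr] at hrel
  have hin : ((-1 : ℂ) ^ ((k.castSucc : Fin (j + 1)) : ℕ)) •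
      (monomial (M' + Finsupp.single (r, c k) 1) 1 * minor c B) ∈ S := by
    rw [eq_neg_of_add_eq_zero_left hrel]
    exact S.neg_mem (S.sum_mem fun l hl => S.smul_mem _ (hmem l (Finset.ne_of_mem_erase hl)))
  exact (S.smul_mem_iff (pow_ne_zero _ (by norm_num))).1 hin

theorem termExp_one_apply {c : Fin j → Fin n} (hc : Function.Injective c) (B : Fin j → Fin n)
    (r : Fin n) (k : Fin j) : termExp c B 1 (r, c k) = if B k = r then 1 else 0 := by
  rw [termExp, Finsupp.finsetSum_apply, Finset.sum_eq_single k]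
  · simp [Finsupp.single_apply]
  · intro a _ ha
    simp [hc.ne ha]
  · simp

/-- A standard product is determined by its diagonal term: rows agree up to the first
difference, where standardness of one side is violated. -/
theorem not_lt_of_standard {c : Fin j → Fin n} (hc : Function.Injective c)
    {M M' : Fin n × Fin n →₀ ℕ} {B B' : Fin j → Fin n} (hB' : IsRowSet B')
    (hstd : IsStandard c M B) (h : M + termExp c B 1 = M' + termExp c B' 1) {k : Fin j}
    (hk : ∀ a < k, B a = B' a) : ¬ B' k < B k := by
  intro hlt
  have h0 := hstd k (B' k) (hB'.2 k) hlt fun a ha => by rw [hk a ha]; exact hB'.1 ha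
  have h1 := DFunLike.congr_fun h (B' k, c k)
  rw [Finsupp.add_apply, Finsupp.add_apply, termExp_one_apply hc, termExp_one_apply hc, h0,
    if_neg hlt.ne', if_pos rfl] at h1
  omega

theorem standard_unique {c : Fin j → Fin n} (hc : Function.Injective c)
    {M M' : Fin n × Fin n →₀ ℕ} {B B' : Fin j → Fin n} (hB : IsRowSet B) (hB' : IsRowSet B')
    (hstd : IsStandard c M B) (hstd' : IsStandard c M' B')
    (h : M + termExp c B 1 = M' + termExp c B' 1) : M = M' ∧ B = B' := by
  have hBB : B = B' := by
    ext1 k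
    induction k using WellFoundedLT.induction with
    | _ k ih =>
      exact le_antisymm (not_lt.1 (not_lt_of_standard hc hB' hstd h ih))
        (not_lt.1 (not_lt_of_standard hc hB hstd' h.symm fun a ha => (ih a ha).symm))
  subst hBB
  exact ⟨add_right_cancel h, rfl⟩

end ColumnMinor

open ColumnMinor

/-- In `ℂ[z_{11}, …, z_{nn}]`, for all `1 ≤ i < j ≤ n`, the product ideal
`J_i^0 · K_j` equals the intersection `J_i^0 ∩ K_j`. -/
theorem J0_mul_K0_eq_inf (n : ℕ) [NeZero n] (hn : 2 ≤ n) (i j : ℕ)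
    (hi : 1 ≤ i) (hij : i < j) (hj : j ≤ n) :
    J0 n i * K0 n j = J0 n i ⊓ K0 n j := by
  refine le_antisymm Ideal.mul_le_inf ?_
  let c : Fin j → Fin n := fun b =>
    ⟨(b : ℕ) % n, Nat.mod_lt _ (Nat.pos_of_ne_zero (NeZero.ne n))⟩
  have hc : ∀ b, (c b : ℕ) = b := fun b => Nat.mod_eq_of_lt (b.2.trans_le hj)
  have hcinj : Function.Injective c := fun a b h => Fin.ext (by rw [← hc a, ← hc b, h])
  have hminor : ∀ B : Fin j → Fin n, IsRowSet B → minor c B ∈ K0 n j := fun B hB =>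
    Ideal.subset_span ⟨B, hB.1, hB.2, rfl⟩
  have hJ : J0 n i = Ideal.span (X '' {q : Fin n × Fin n | q.1 = rowN n ∧ (q.2 : ℕ) < i}) := by
    unfold J0 z0
    congr 1
    ext f
    constructor
    · rintro ⟨k, hk, rfl⟩
      exact ⟨(rowN n, k), ⟨rfl, hk⟩, rfl⟩
    · rintro ⟨⟨_, k⟩, ⟨rfl, hk⟩, rfl⟩
      exact ⟨k, hk, rfl⟩
  rintro f ⟨hfJ, hfK⟩
  let ι := {q : (Fin n × Fin n →₀ ℕ) × (Fin j → Fin n) // IsRowSet q.2 ∧ IsStandard c q.1 q.2}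
  let v : ι → MvPolynomial (Fin n × Fin n) ℂ := fun q => monomial q.1.1 1 * minor c q.1.2
  have hspan : ∀ M : Fin n × Fin n →₀ ℕ,
      monomial M 1 * f ∈ Submodule.span ℂ (Set.range v) := by
    refine Submodule.span_induction (p := fun f _ => ∀ M : Fin n × Fin n →₀ ℕ,
      monomial M 1 * f ∈ Submodule.span ℂ (Set.range v)) ?_ ?_ ?_ ?_ hfK
    · rintro _ ⟨B, hB, hB1, rfl⟩ M
      exact monomial_mul_minor_mem hc
        (fun M B hB hs => Submodule.subset_span (Set.mem_range_self (f := v) ⟨(M, B), hB, hs⟩)) M B ⟨hB, hB1⟩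
    · simp
    · intro x y _ _ hx hy M
      rw [mul_add]
      exact add_mem (hx M) (hy M)
    · intro a x _ hx M
      induction a using MvPolynomial.induction_on' with
      | monomial u t =>
        have : monomial M 1 * (monomial u t • x) = t • (monomial (M + u) (1 : ℂ) * x) := by
          rw [smul_eq_mul, ← mul_assoc, monomial_mul, one_mul, ← smul_mul_assoc, smul_monomial,
            smul_eq_mul, mul_one]
        rw [this]
        exact Submodule.smul_mem _ _ (hx _)
      | add p q hp hq =>
        rw [add_smul, mul_add]
        exact add_mem hp hq
  obtain ⟨t, ht⟩ := Finsupp.mem_span_range_iff_exists_finsupp.1 (hspan 0)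
  rw [← C_apply, C_1, one_mul] at ht
  have hdiag : ∀ q : ι, ∀ k : Fin n, (k : ℕ) < i → termExp c q.1.2 1 (rowN n, k) = 0 := by
    intro q k hk
    have hkj : (k : ℕ) < j := hk.trans hij
    have hck : c ⟨k, hkj⟩ = k := Fin.ext (hc _)
    rw [← hck, termExp_one_apply hcinj, if_neg]
    intro hB
    have h1 : q.1.2 ⟨_, hkj⟩ < q.1.2 ⟨i, hij⟩ := q.2.1.1 hk
    have h2 := (q.1.2 ⟨i, hij⟩).2
    rw [hB, Fin.lt_def] at h1
    simp only [rowN] at h1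
    omega
  have hdvd : ∀ q ∈ t.support, ∃ k : Fin n, (k : ℕ) < i ∧ q.1.1 (rowN n, k) ≠ 0 := by
    by_contra hne
    push Not at hne
    obtain ⟨q₁, hq₁, hq₁'⟩ := hne
    classical
    obtain ⟨q₀, hq₀, hmax⟩ := Finset.exists_max_image
      (t.support.filter fun q => ∀ k : Fin n, (k : ℕ) < i → q.1.1 (rowN n, k) = 0)
      (fun q => wt (q.1.1 + termExp c q.1.2 1)) ⟨q₁, Finset.mem_filter.2 ⟨hq₁, hq₁'⟩⟩
    rw [Finset.mem_filter] at hq₀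
    have hm0 : ∀ k : Fin n, (k : ℕ) < i →
        (q₀.1.1 + termExp c q₀.1.2 1) (rowN n, k) = 0 := by
      intro k hk
      rw [Finsupp.add_apply, hq₀.2 k hk, hdiag q₀ k hk]
    have hcoeff : coeff (q₀.1.1 + termExp c q₀.1.2 1) f = t q₀ := by
      rw [← ht, Finsupp.sum, coeff_sum, Finset.sum_eq_single q₀]
      · rw [coeff_smul, coeff_diagonal hc _ q₀.2.1.1, smul_eq_mul, mul_one]
      · intro q hq hqq
        rw [coeff_smul]
        by_contra hcq
        obtain ⟨σ, hσ⟩ := exists_of_coeff_ne_zero (right_ne_zero_of_mul hcq)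
        have hqT : ∀ k : Fin n, (k : ℕ) < i → q.1.1 (rowN n, k) = 0 := by
          intro k hk
          have := hm0 k hk
          rw [← hσ, Finsupp.add_apply] at this
          omega
        have hle := hmax q (Finset.mem_filter.2 ⟨hq, hqT⟩)
        obtain rfl : σ = 1 := by
          by_contra hσ1
          have := wt_termExp_lt hc q.2.1.1 hσ1
          rw [← hσ, map_add, map_add] at hle
          omega
        obtain ⟨h1, h2⟩ := standard_unique hcinj q.2.1 q₀.2.1 q.2.2 q₀.2.2 hσ
        exact hqq (Subtype.ext (Prod.ext h1 h2))
      · intro h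
        exact absurd hq₀.1 h
    rw [hJ] at hfJ
    obtain ⟨⟨_, k⟩, ⟨rfl, hk⟩, hne⟩ := mem_ideal_span_X_image.1 hfJ _
      (mem_support_iff.2 (hcoeff ▸ Finsupp.mem_support_iff.1 hq₀.1))
    exact hne (hm0 k hk)
  rw [← ht]
  refine Ideal.sum_mem _ fun q hq => ?_
  obtain ⟨k, hk, hqk⟩ := hdvd q hq
  change t q • v q ∈ _
  rw [smul_eq_C_mul]
  refine Ideal.mul_mem_left _ _ (Ideal.mul_mem_mul ?_ (hminor _ q.2.1))
  refine Ideal.mem_of_dvd _ ?_ (Ideal.subset_span ⟨k, hk, rfl⟩)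
  exact X_dvd_monomial.2 (Or.inr hqk)
end

section
/- In C[t, z_{11}, ..., z_{nn}], for all 0 ≤ i < j ≤ n the ideal J_i^t + K_j is saturated with respect to the element t; that is, if t^k f ∈ J_i^t + K_j for some k ≥ 0, then f ∈ J_i^t + K_j. -/
open MvPolynomial

open Polynomial in
theorem Polynomial.induction_X_mul {Q : Type*} [CommRing Q] {motive : Q[X] → Prop}
    (hC : ∀ q, motive (C q)) (hadd : ∀ f g, motive f → motive g → motive (f + g))
    (hX : ∀ f, motive f → motive (X * f)) (f : Q[X]) : motive f := by
  induction f using Polynomial.induction_on' with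
  | add f g hf hg => exact hadd f g hf hg
  | monomial k a =>
    rw [← C_mul_X_pow_eq_monomial]
    induction k with
    | zero => simpa using hC a
    | succ k ih =>
      have : C a * X ^ (k + 1) = X * (C a * X ^ k) := by ring
      rw [this]
      exact hX _ ih

/-- The maximal minor of `M` on the rows listed by `B`. -/
def maxMinor {R : Type*} [CommRing R] {m j : ℕ} (M : Matrix (Fin m) (Fin j) R)
    (B : Fin j → Fin m) : R :=
  (M.submatrix B id).det

/-- A family `v`, indexed by the row sets of the maximal minors of `M`, satisfies the
Eagon–Northcott relations: the formal expansion of each determinant with a repeated column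
vanishes. -/
def EagonNorthcottRel {R V : Type*} [CommRing R] [AddCommGroup V] [Module R V] {m j : ℕ}
    (M : Matrix (Fin m) (Fin j) R) (v : (Fin j → Fin m) → V) : Prop :=
  ∀ D : Fin (j + 1) → Fin m, StrictMono D → ∀ c : Fin j,
    ∑ a : Fin (j + 1), ((-1) ^ (a : ℕ) * M (D a) c) • v (D ∘ a.succAbove) = 0

/-- The pairs consisting of a maximal minor and the corresponding member of the family `v`. -/
def minorPairs {R V : Type*} [CommRing R] {m j : ℕ}
    (M : Matrix (Fin m) (Fin j) R) (v : (Fin j → Fin m) → V) : Set (R × V) :=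
  {p | ∃ B, StrictMono B ∧ p = (maxMinor M B, v B)}

/-- The ideal of maximal minors of `M` is presented by the Eagon–Northcott relations, phrased
as a universal property: every family satisfying these relations satisfies all
linear relations among the maximal minors. -/
def IsEagonNorthcottPresented {R : Type} [CommRing R] {m j : ℕ}
    (M : Matrix (Fin m) (Fin j) R) : Prop :=
  ∀ (V : Type) [AddCommGroup V] [Module R V] (v : (Fin j → Fin m) → V),
    EagonNorthcottRel M v → ∀ w : V, ((0 : R), w) ∈ Submodule.span R (minorPairs M v) → w = 0

theorem eagonNorthcottRel_maxMinor {R : Type*} [CommRing R] {m j : ℕ}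
    (M : Matrix (Fin m) (Fin j) R) : EagonNorthcottRel M (maxMinor M) := by
  intro D _ c
  have h : (Matrix.of fun (a : Fin (j + 1)) (b : Fin (j + 1)) =>
      (Fin.cons (M (D a) c) (M (D a)) : Fin (j + 1) → R) b).det = 0 :=
    Matrix.det_zero_of_column_eq (Fin.succ_ne_zero c).symm (by simp)
  rw [Matrix.det_succ_column_zero] at h
  rw [← h]
  refine Finset.sum_congr rfl fun a _ => ?_
  simp only [smul_eq_mul, maxMinor, Matrix.of_apply, Fin.cons_zero]
  congr 1

theorem EagonNorthcottRel.prodMk {R V W : Type*} [CommRing R] [AddCommGroup V] [Module R V]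
    [AddCommGroup W] [Module R W] {m j : ℕ} {M : Matrix (Fin m) (Fin j) R}
    {v : (Fin j → Fin m) → V} {w : (Fin j → Fin m) → W}
    (hv : EagonNorthcottRel M v) (hw : EagonNorthcottRel M w) :
    EagonNorthcottRel M fun B => (v B, w B) := by
  intro D hD c
  ext
  · simpa [Prod.fst_sum] using hv D hD c
  · simpa [Prod.snd_sum] using hw D hD c

theorem StrictMono.eq_succ_comp_or_eq_cons {m j : ℕ} {B : Fin (j + 1) → Fin (m + 1)}
    (hB : StrictMono B) :
    (∃ B' : Fin (j + 1) → Fin m, StrictMono B' ∧ B = Fin.succ ∘ B') ∨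
      ∃ C : Fin j → Fin m, StrictMono C ∧ B = Fin.cons 0 (Fin.succ ∘ C) := by
  by_cases h0 : B 0 = 0
  · right
    have hne : ∀ a : Fin j, B a.succ ≠ 0 := fun a =>
      ((Fin.zero_le _).trans_lt (hB (Fin.succ_pos a))).ne'
    refine ⟨fun a => (B a.succ).pred (hne a), fun a b hab => ?_, ?_⟩
    · simpa [Fin.pred_lt_pred_iff] using hB (Fin.succ_lt_succ_iff.2 hab)
    · funext a
      cases a using Fin.cases <;> simp [h0]
  · left
    have hne : ∀ a, B a ≠ 0 := fun a =>
      ((Fin.pos_iff_ne_zero.2 h0).trans_le (hB.monotone (Fin.zero_le a))).ne'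
    refine ⟨fun a => (B a).pred (hne a), fun a b hab => ?_, ?_⟩
    · simpa [Fin.pred_lt_pred_iff] using hB hab
    · funext a
      simp

theorem strictMono_cons_zero_succ {m j : ℕ} {C : Fin j → Fin m} (hC : StrictMono C) :
    StrictMono (Fin.cons 0 (Fin.succ ∘ C) : Fin (j + 1) → Fin (m + 1)) := by
  intro a b hab
  cases b using Fin.cases with
  | zero => exact absurd hab (Fin.not_lt_zero _)
  | succ b =>
    cases a using Fin.cases with
    | zero => simp
    | succ a => simpa using hC (Fin.succ_lt_succ_iff.1 hab)

theorem cons_zero_succ_comp_succAbove {m j : ℕ} (B : Fin (j + 1) → Fin m) (a : Fin (j + 1)) :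
    (Fin.cons 0 (Fin.succ ∘ B) : Fin (j + 2) → Fin (m + 1)) ∘ a.succ.succAbove =
      Fin.cons 0 (Fin.succ ∘ (B ∘ a.succAbove)) := by
  funext b
  cases b using Fin.cases <;> simp

/-- The Eagon–Northcott relation for a row set containing the first row. -/
theorem EagonNorthcottRel.smul_eq_sum {R V : Type*} [CommRing R] [AddCommGroup V] [Module R V]
    {m j : ℕ} {M : Matrix (Fin (m + 1)) (Fin (j + 1)) R} {v : (Fin (j + 1) → Fin (m + 1)) → V}
    (hv : EagonNorthcottRel M v) {B : Fin (j + 1) → Fin m} (hB : StrictMono B)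
    (c : Fin (j + 1)) :
    M 0 c • v (Fin.succ ∘ B) = ∑ a : Fin (j + 1), ((-1) ^ (a : ℕ) * M (B a).succ c) •
      v (Fin.cons 0 (Fin.succ ∘ (B ∘ a.succAbove))) := by
  have h := hv _ (strictMono_cons_zero_succ hB) c
  rw [Fin.sum_univ_succ] at h
  simp only [cons_zero_succ_comp_succAbove, Fin.cons_succ, Fin.cons_zero, Function.comp_apply,
    Fin.val_succ, Fin.val_zero, pow_zero, one_mul, Fin.succAbove_zero, pow_succ, mul_neg, mul_one,
    neg_mul, neg_smul, Finset.sum_neg_distrib] at h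
  have h2 : (Fin.cons 0 (Fin.succ ∘ B) : Fin (j + 2) → Fin (m + 1)) ∘ Fin.succ =
      Fin.succ ∘ B := by
    funext b
    simp
  rw [h2] at h
  exact add_neg_eq_zero.1 h

section Filtration

variable {Q P W : Type*} [CommRing Q] [CommRing P] [Algebra Q P] [AddCommGroup W] [Module P W]
  [Module Q W] [IsScalarTower Q P W]

/-- The increasing filtration `A + C + x C + ⋯ + x ^ (n - 1) C`. -/
def powFiltration (A C : Submodule Q W) (x : P) : ℕ → Submodule Q W
  | 0 => A
  | n + 1 => powFiltration A C x n ⊔ C.map (Algebra.lsmul Q Q W (x ^ n))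

theorem powFiltration_mono (A C : Submodule Q W) (x : P) : Monotone (powFiltration A C x) :=
  monotone_nat_of_le_succ fun _ => le_sup_left

theorem pow_smul_mem_powFiltration (A : Submodule Q W) {C : Submodule Q W} (x : P) (n : ℕ) {c : W}
    (hc : c ∈ C) : x ^ n • c ∈ powFiltration A C x (n + 1) :=
  Submodule.mem_sup_right ⟨c, hc, rfl⟩

theorem smul_mem_powFiltration {A C : Submodule Q W} {x : P} (hA : ∀ a ∈ A, x • a ∈ C) :
    ∀ (n : ℕ) {w : W}, w ∈ powFiltration A C x n → x • w ∈ powFiltration A C x (n + 1)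
  | 0, w, hw => by simpa using pow_smul_mem_powFiltration A x 0 (hA w hw)
  | n + 1, w, hw => by
    obtain ⟨u, hu, _, ⟨c, hc, rfl⟩, rfl⟩ := Submodule.mem_sup.1 hw
    rw [smul_add]
    refine add_mem (powFiltration_mono A C x (n + 1).le_succ (smul_mem_powFiltration hA n hu)) ?_
    have := pow_smul_mem_powFiltration A x (n + 1) hc
    rwa [pow_succ', mul_smul] at this

/-- If `P` is a polynomial ring over `Q` in the variable `x`, the `powFiltration` exhausts
the `P`-span. -/
theorem exists_mem_powFiltration {A C : Submodule Q W} {x : P} (e : P ≃+* Polynomial Q)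
    (he : ∀ q, e (algebraMap Q P q) = Polynomial.C q) (hx : e x = Polynomial.X)
    (hA : ∀ a ∈ A, x • a ∈ C) {w : W}
    (hw : w ∈ Submodule.span P ((A : Set W) ∪ C)) : ∃ n, w ∈ powFiltration A C x n := by
  have hadd : ∀ {u w : W}, (∃ n, u ∈ powFiltration A C x n) →
      (∃ n, w ∈ powFiltration A C x n) → ∃ n, u + w ∈ powFiltration A C x n := by
    rintro u w ⟨n, hn⟩ ⟨k, hk⟩
    exact ⟨max n k, add_mem (powFiltration_mono A C x (le_max_left _ _) hn)
      (powFiltration_mono A C x (le_max_right _ _) hk)⟩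
  have hsmul : ∀ f : Polynomial Q, ∀ w : W, (∃ n, w ∈ powFiltration A C x n) →
      ∃ n, e.symm f • w ∈ powFiltration A C x n := by
    intro f
    induction f using Polynomial.induction_X_mul with
    | hC q =>
      rintro w ⟨n, hn⟩
      refine ⟨n, ?_⟩
      rw [← he, e.symm_apply_apply, algebraMap_smul]
      exact Submodule.smul_mem _ _ hn
    | hadd f g hf hg =>
      intro w hw
      rw [map_add, add_smul]
      exact hadd (hf w hw) (hg w hw)
    | hX f hf =>
      intro w hw
      obtain ⟨n, hn⟩ := hf w hw
      refine ⟨n + 1, ?_⟩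
      rw [map_mul, ← hx, e.symm_apply_apply, mul_smul]
      exact smul_mem_powFiltration hA n hn
  induction hw using Submodule.span_induction with
  | mem w hw =>
    rcases hw with hw | hw
    · exact ⟨0, hw⟩
    · exact ⟨1, by simpa using pow_smul_mem_powFiltration A x 0 hw⟩
  | zero => exact ⟨0, zero_mem _⟩
  | add u w _ _ hu hw => exact hadd hu hw
  | smul p w _ hw => simpa using hsmul (e p) w hw

end Filtration

theorem maxMinor_succ_comp {Q P : Type*} [CommRing Q] [CommRing P] [Algebra Q P] {m j : ℕ}
    {M : Matrix (Fin (m + 1)) (Fin j) P} {N : Matrix (Fin m) (Fin j) Q}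
    (hN : ∀ a b, M a.succ b = algebraMap Q P (N a b)) (B : Fin j → Fin m) :
    maxMinor M (Fin.succ ∘ B) = algebraMap Q P (maxMinor N B) := by
  rw [maxMinor, maxMinor, RingHom.map_det]
  congr 1
  ext a b
  simp [hN]

theorem exists_maxMinor_cons_eq {Q P : Type*} [CommRing Q] [CommRing P] [Algebra Q P] {m j : ℕ}
    {M : Matrix (Fin (m + 1)) (Fin (j + 1)) P} {N : Matrix (Fin m) (Fin (j + 1)) Q}
    {r : Fin j → Q} (hr : ∀ b, M 0 b.succ = algebraMap Q P (r b))
    (hN : ∀ a b, M a.succ b = algebraMap Q P (N a b)) (C : Fin j → Fin m) :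
    ∃ q : Q, maxMinor M (Fin.cons 0 (Fin.succ ∘ C)) =
      M 0 0 * algebraMap Q P (maxMinor (N.submatrix id Fin.succ) C) + algebraMap Q P q := by
  have hminor : ∀ b : Fin (j + 1), ((M.submatrix (Fin.cons 0 (Fin.succ ∘ C)) id).submatrix
      Fin.succ b.succAbove).det = algebraMap Q P (N.submatrix C b.succAbove).det := by
    intro b
    rw [RingHom.map_det]
    congr 1
    ext a c
    simp [hN]
  refine ⟨∑ b : Fin j, (-1) ^ ((b : ℕ) + 1) * r b * (N.submatrix C b.succ.succAbove).det, ?_⟩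
  rw [maxMinor, Matrix.det_succ_row_zero, Fin.sum_univ_succ]
  simp only [hminor]
  simp [hr, maxMinor, map_sum]

/-- Adjoining a row whose first entry is a new polynomial variable preserves presentation by the
Eagon–Northcott relations. -/
theorem IsEagonNorthcottPresented.of_variable {Q P : Type} [CommRing Q] [CommRing P] [Algebra Q P]
    {m j : ℕ} {M : Matrix (Fin (m + 1)) (Fin (j + 1)) P} {N : Matrix (Fin m) (Fin (j + 1)) Q}
    {r : Fin j → Q} (e : P ≃+* Polynomial Q)
    (he : ∀ q, e (algebraMap Q P q) = Polynomial.C q) (hx : e (M 0 0) = Polynomial.X)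
    (hr : ∀ b, M 0 b.succ = algebraMap Q P (r b))
    (hN : ∀ a b, M a.succ b = algebraMap Q P (N a b))
    (hpres : IsEagonNorthcottPresented N)
    (hpres' : IsEagonNorthcottPresented (N.submatrix id Fin.succ)) :
    IsEagonNorthcottPresented M := by
  intro V _ _ v hv w hw
  let _ : Module Q V := Module.compHom V (algebraMap Q P)
  have : IsScalarTower Q P V := IsScalarTower.of_algebraMap_smul fun _ _ => rfl
  have hinj : Function.Injective (algebraMap Q P) := fun a b hab =>
    Polynomial.C_injective (by rw [← he, ← he, hab])
  set x := M 0 0 with hxdef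
  set u : (Fin (j + 1) → Fin (m + 1)) → P × V := fun B => (maxMinor M B, v B) with hu
  have hrel : EagonNorthcottRel M u := (eagonNorthcottRel_maxMinor M).prodMk hv
  let A : Submodule Q (P × V) :=
    Submodule.span Q {p | ∃ B, StrictMono B ∧ p = u (Fin.succ ∘ B)}
  let C : Submodule Q (P × V) :=
    Submodule.span Q {p | ∃ D, StrictMono D ∧ p = u (Fin.cons 0 (Fin.succ ∘ D))}
  have hsum : ∀ (B : Fin (j + 1) → Fin m), StrictMono B → ∀ c,
      M 0 c • u (Fin.succ ∘ B) = ∑ a : Fin (j + 1), ((-1) ^ (a : ℕ) * N (B a) c) •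
        u (Fin.cons 0 (Fin.succ ∘ (B ∘ a.succAbove))) := by
    intro B hB c
    rw [hrel.smul_eq_sum hB c]
    refine Finset.sum_congr rfl fun a _ => ?_
    rw [hN, ← algebraMap_smul P ((-1) ^ (a : ℕ) * N (B a) c)]
    simp
  have hA : ∀ a ∈ A, x • a ∈ C := by
    intro a ha
    induction ha using Submodule.span_induction with
    | mem a ha =>
      obtain ⟨B, hB, rfl⟩ := ha
      rw [hxdef, hsum B hB]
      exact sum_mem fun a _ => C.smul_mem _ (Submodule.subset_span
        ⟨_, hB.comp (Fin.strictMono_succAbove a), rfl⟩)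
    | zero => simp
    | add a b _ _ ha hb => rw [smul_add]; exact add_mem ha hb
    | smul q a _ ha => rw [smul_comm]; exact C.smul_mem q ha
  -- Elements of `A` with vanishing first component.
  have hA0 : ∀ w : V, ((0 : P), w) ∈ A → w = 0 := by
    intro w hw
    refine hpres V (fun B => v (Fin.succ ∘ B)) ?_ w ?_
    · intro D hD c
      rw [← hv (Fin.succ ∘ D) ((Fin.strictMono_succ).comp hD) c]
      refine Finset.sum_congr rfl fun a _ => ?_
      rw [← algebraMap_smul P ((-1) ^ (a : ℕ) * N (D a) c)]
      simp [hN, Function.comp_assoc]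
    · have key : ∀ p ∈ A, ∃ q, algebraMap Q P q = p.1 ∧
          (q, p.2) ∈ Submodule.span Q (minorPairs N fun B => v (Fin.succ ∘ B)) := by
        intro p hp
        induction hp using Submodule.span_induction with
        | mem p hp =>
          obtain ⟨B, hB, rfl⟩ := hp
          exact ⟨maxMinor N B, (maxMinor_succ_comp hN B).symm,
            Submodule.subset_span ⟨B, hB, rfl⟩⟩
        | zero => exact ⟨0, by simp, zero_mem _⟩
        | add p p' _ _ hp hp' =>
          obtain ⟨q, hq, hq2⟩ := hp
          obtain ⟨q', hq', hq2'⟩ := hp'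
          exact ⟨q + q', by simp [hq, hq'], add_mem hq2 hq2'⟩
        | smul s p _ hp =>
          obtain ⟨q, hq, hq2⟩ := hp
          exact ⟨s * q, by simp [hq, Algebra.smul_def], Submodule.smul_mem _ s hq2⟩
      obtain ⟨q, hq, hq2⟩ := key _ hw
      obtain rfl : q = 0 := hinj (by simpa using hq)
      exact hq2
  -- The leading coefficient of the first component of an element of `C`.
  have hC : ∀ p ∈ C, ∃ d q : Q, p.1 = x * algebraMap Q P d + algebraMap Q P q ∧
      (d = 0 → p ∈ A) := by
    have hrel' : EagonNorthcottRel (N.submatrix id Fin.succ) fun D : Fin j → Fin m =>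
        A.mkQ (u (Fin.cons 0 (Fin.succ ∘ D))) := by
      intro D hD c
      simp only [Matrix.submatrix_apply, id, ← map_smul, ← map_sum]
      rw [← hsum D hD c.succ, hr, algebraMap_smul]
      exact (Submodule.Quotient.mk_eq_zero A).2
        (A.smul_mem _ (Submodule.subset_span ⟨D, hD, rfl⟩))
    have key : ∀ p ∈ C, ∃ d q : Q, p.1 = x * algebraMap Q P d + algebraMap Q P q ∧
        (d, A.mkQ p) ∈ Submodule.span Q (minorPairs (N.submatrix id Fin.succ)
          fun D : Fin j → Fin m => A.mkQ (u (Fin.cons 0 (Fin.succ ∘ D)))) := by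
      intro p hp
      induction hp using Submodule.span_induction with
      | mem p hp =>
        obtain ⟨D, hD, rfl⟩ := hp
        obtain ⟨q, hq⟩ := exists_maxMinor_cons_eq hr hN D
        exact ⟨_, q, hq, Submodule.subset_span ⟨D, hD, rfl⟩⟩
      | zero => exact ⟨0, 0, by simp, by rw [map_zero]; exact zero_mem _⟩
      | add p p' _ _ hp hp' =>
        obtain ⟨d, q, hq, hq2⟩ := hp
        obtain ⟨d', q', hq', hq2'⟩ := hp'
        refine ⟨d + d', q + q', by simp only [Prod.fst_add, hq, hq', map_add]; ring, ?_⟩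
        rw [map_add]
        exact add_mem hq2 hq2'
      | smul s p _ hp =>
        obtain ⟨d, q, hq, hq2⟩ := hp
        refine ⟨s * d, s * q, ?_, ?_⟩
        · simp only [Prod.smul_fst, hq, map_mul, Algebra.smul_def]
          ring
        · rw [map_smul]
          exact Submodule.smul_mem _ s hq2
    intro p hp
    obtain ⟨d, q, hq, hd⟩ := key p hp
    refine ⟨d, q, hq, ?_⟩
    rintro rfl
    exact (Submodule.Quotient.mk_eq_zero A).1 (hpres' _ _ hrel' _ hd)
  have hdeg : ∀ n, ∀ p ∈ powFiltration A C x n, ∀ k, n < k → (e p.1).coeff k = 0 := by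
    intro n
    induction n with
    | zero =>
      intro p hp k hk
      induction hp using Submodule.span_induction with
      | mem p hp =>
        obtain ⟨B, hB, rfl⟩ := hp
        simp only [hu]
        rw [maxMinor_succ_comp hN, he, Polynomial.coeff_C, if_neg hk.ne']
      | zero => simp
      | add p p' _ _ hp hp' => simp [hp, hp']
      | smul s p _ hp => simp [Algebra.smul_def, he, hp]
    | succ n ih =>
      intro p hp k hk
      obtain ⟨p', hp', _, ⟨c, hc, rfl⟩, rfl⟩ := Submodule.mem_sup.1 hp
      obtain ⟨d, q, hq, -⟩ := hC c hc
      have h1 : n + 1 ≠ k := hk.ne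
      have h2 : n ≠ k := by omega
      have h3 : (e ((x ^ n • c).1)).coeff k = 0 := by
        have : e ((x ^ n • c).1) =
            Polynomial.C d * Polynomial.X ^ (n + 1) + Polynomial.C q * Polynomial.X ^ n := by
          simp only [Prod.smul_fst, hq, smul_eq_mul, map_mul, map_add, map_pow, hx, he]
          ring
        rw [this]
        simp [Polynomial.coeff_X_pow, h1.symm, h2.symm]
      simp only [Prod.fst_add, map_add, Polynomial.coeff_add, ih p' hp' k (by omega), zero_add]
      exact h3
  have hT : ∀ n, ∀ w : V, ((0 : P), w) ∈ powFiltration A C x n → w = 0 := by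
    intro n
    induction n with
    | zero => exact hA0
    | succ n ih =>
      intro w hw
      refine ih w ?_
      obtain ⟨p, hp, _, ⟨c, hc, rfl⟩, hpc⟩ := Submodule.mem_sup.1 hw
      obtain ⟨d, q, hq, hd⟩ := hC c hc
      have hcoeff : d = 0 := by
        have h1 : e (p.1 + x ^ n * c.1) = 0 := by
          have := congrArg Prod.fst hpc
          simp only [Prod.fst_add, Algebra.lsmul_coe, Prod.smul_fst, smul_eq_mul] at this
          rw [this, map_zero]
        have h2 : e (x ^ n * c.1) =
            Polynomial.C d * Polynomial.X ^ (n + 1) + Polynomial.C q * Polynomial.X ^ n := by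
          simp only [hq, map_mul, map_add, map_pow, hx, he]
          ring
        have h3 := congrArg (fun f => Polynomial.coeff f (n + 1)) h1
        simpa [h2, hdeg n p hp (n + 1) n.lt_succ_self, Polynomial.coeff_X_pow] using h3
      have hcA := hd hcoeff
      rw [← hpc]
      refine add_mem hp ?_
      change x ^ n • c ∈ _
      cases n with
      | zero =>
        rw [pow_zero, one_smul]
        exact hcA
      | succ n =>
        rw [pow_succ, mul_smul]
        exact pow_smul_mem_powFiltration A x n (hA c hcA)
  have hspan : Submodule.span P (minorPairs M v) ≤
      Submodule.span P ((A : Set (P × V)) ∪ C) := by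
    refine Submodule.span_mono ?_
    rintro _ ⟨B, hB, rfl⟩
    rcases hB.eq_succ_comp_or_eq_cons with ⟨B', hB', rfl⟩ | ⟨D, hD, rfl⟩
    · exact Or.inl (Submodule.subset_span ⟨B', hB', rfl⟩)
    · exact Or.inr (Submodule.subset_span ⟨D, hD, rfl⟩)
  obtain ⟨n, hn⟩ := exists_mem_powFiltration e he hx hA (hspan hw)
  exact hT n w hn

theorem isEagonNorthcottPresented_of_isEmpty_columns {R : Type} [CommRing R] {m : ℕ}
    (M : Matrix (Fin m) (Fin 0) R) : IsEagonNorthcottPresented M := by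
  intro V _ _ v _ w hw
  have hsub : minorPairs M v ⊆ {((1 : R), v Fin.elim0)} := by
    rintro _ ⟨B, -, rfl⟩
    rw [Subsingleton.elim B Fin.elim0]
    simp [maxMinor]
  obtain ⟨g, hg⟩ := Submodule.mem_span_singleton.1 (Submodule.span_mono hsub hw)
  simp only [Prod.smul_mk, smul_eq_mul, mul_one, Prod.mk.injEq] at hg
  rw [← hg.2, hg.1, zero_smul]

theorem isEagonNorthcottPresented_of_isEmpty_rows {R : Type} [CommRing R] {j : ℕ}
    (M : Matrix (Fin 0) (Fin (j + 1)) R) : IsEagonNorthcottPresented M := by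
  intro V _ _ v _ w hw
  have hempty : minorPairs M v = ∅ := by
    ext p
    simp only [minorPairs, Set.mem_ofPred_eq, Set.mem_empty_iff_false, iff_false]
    rintro ⟨B, -⟩
    exact (B 0).elim0
  rw [hempty, Submodule.span_empty, Submodule.mem_bot] at hw
  exact congrArg Prod.snd hw

/-- The polynomial ring on `σ` as a univariate polynomial ring in the variable `s`. -/
noncomputable def polynomialEquivOfVar (k : Type) [CommRing k] {σ : Type} [DecidableEq σ] (s : σ) :
    MvPolynomial σ k ≃ₐ[k] Polynomial (MvPolynomial {y // y ≠ s} k) :=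
  (renameEquiv k (Equiv.optionSubtypeNe s).symm).trans (optionEquivLeft k _)

theorem polynomialEquivOfVar_X_self (k : Type) [CommRing k] {σ : Type} [DecidableEq σ] (s : σ) :
    polynomialEquivOfVar k s (X s) = Polynomial.X := by
  simp [polynomialEquivOfVar]

theorem polynomialEquivOfVar_rename (k : Type) [CommRing k] {σ : Type} [DecidableEq σ] (s : σ)
    (q : MvPolynomial {y // y ≠ s} k) :
    polynomialEquivOfVar k s (rename Subtype.val q) = Polynomial.C q := by
  induction q using MvPolynomial.induction_on with
  | C a => simp [polynomialEquivOfVar]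
  | add p q hp hq => simp [hp, hq]
  | mul_X p y hp =>
    rw [map_mul, map_mul, hp, rename_X, map_mul]
    simp [polynomialEquivOfVar, Equiv.optionSubtypeNe_symm_of_ne y.2]

theorem isEagonNorthcottPresented_of_first_row {k σ : Type} [CommRing k] [DecidableEq σ] {m j : ℕ}
    (s : σ) (M : Matrix (Fin (m + 1)) (Fin (j + 1)) (MvPolynomial σ k))
    (hs : M 0 0 = X s)
    (hr : ∀ b : Fin j, ∃ q : MvPolynomial {y // y ≠ s} k, M 0 b.succ = rename Subtype.val q)
    (N : Matrix (Fin m) (Fin (j + 1)) (MvPolynomial {y // y ≠ s} k))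
    (hN : ∀ a b, M a.succ b = rename Subtype.val (N a b))
    (hpres : IsEagonNorthcottPresented N)
    (hpres' : IsEagonNorthcottPresented (N.submatrix id Fin.succ)) :
    IsEagonNorthcottPresented M := by
  let _ : Algebra (MvPolynomial {y // y ≠ s} k) (MvPolynomial σ k) :=
    (rename (R := k) (Subtype.val : {y // y ≠ s} → σ)).toRingHom.toAlgebra
  choose r hr using hr
  exact IsEagonNorthcottPresented.of_variable (polynomialEquivOfVar k s).toRingEquiv
    (polynomialEquivOfVar_rename k s) (by rw [hs]; exact polynomialEquivOfVar_X_self k s)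
    hr hN hpres hpres'

/-- The maximal minors of a matrix of distinct variables are presented by the Eagon–Northcott
relations. -/
theorem isEagonNorthcottPresented_generic (k : Type) [CommRing k] (m j : ℕ) (σ : Type)
    (ι : Fin m → Fin j → σ) (hι : Function.Injective2 ι) :
    IsEagonNorthcottPresented (Matrix.of fun a b => (X (ι a b) : MvPolynomial σ k)) := by
  classical
  induction m generalizing j σ with
  | zero =>
    cases j with
    | zero => exact isEagonNorthcottPresented_of_isEmpty_columns _
    | succ j => exact isEagonNorthcottPresented_of_isEmpty_rows _
  | succ m ih =>
    cases j with
    | zero => exact isEagonNorthcottPresented_of_isEmpty_columns _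
    | succ j =>
      have hne : ∀ a b, ι (Fin.succ a) b ≠ ι 0 0 := fun a b h => Fin.succ_ne_zero a (hι h).1
      have hne' : ∀ b, ι 0 (Fin.succ b) ≠ ι 0 0 := fun b h => Fin.succ_ne_zero b (hι h).2
      have hpres := ih (j + 1) {y // y ≠ ι 0 0} (fun a b => ⟨ι a.succ b, hne a b⟩)
        fun a a' b b' h => by simpa using hι (congrArg Subtype.val h)
      have hpres' := ih j {y // y ≠ ι 0 0} (fun a b => ⟨ι a.succ b.succ, hne a b.succ⟩)
        fun a a' b b' h => by simpa using hι (congrArg Subtype.val h)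
      exact isEagonNorthcottPresented_of_first_row (ι 0 0) _ rfl
        (fun b => ⟨X ⟨_, hne' b⟩, by rw [rename_X]; rfl⟩) _
        (fun a b => by rw [Matrix.of_apply, Matrix.of_apply, rename_X]) hpres hpres'

/-- The ideal of maximal minors of `M`. -/
def maxMinorIdeal {R : Type*} [CommRing R] {m j : ℕ} (M : Matrix (Fin m) (Fin j) R) : Ideal R :=
  Ideal.span {f | ∃ B, StrictMono B ∧ f = maxMinor M B}

theorem maxMinor_map {R S : Type*} [CommRing R] [CommRing S] (φ : R →+* S) {m j : ℕ}
    (M : Matrix (Fin m) (Fin j) R) (B : Fin j → Fin m) :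
    maxMinor (M.map φ) B = φ (maxMinor M B) := by
  rw [maxMinor, maxMinor, RingHom.map_det]
  rfl

/-- If the maximal minors of the reduction of `M` modulo the regular element `t` are presented by
the Eagon–Northcott relations, then `t` is regular modulo the maximal minors of `M`. -/
theorem mem_maxMinorIdeal_of_mul_mem {R : Type} [CommRing R] {t : R}
    (ht : IsLeftRegular t) (φ : R →+* R) (hφt : φ t = 0) (hφ : ∀ g, t ∣ φ g - g) {m j : ℕ}
    (M : Matrix (Fin m) (Fin j) R) (hpres : IsEagonNorthcottPresented (M.map φ)) {f : R}
    (hf : t * f ∈ maxMinorIdeal M) : f ∈ maxMinorIdeal M := by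
  set I := maxMinorIdeal M
  set L : Ideal R := Ideal.span {t} * I
  have hφI : ∀ g, ∀ y ∈ I, Ideal.Quotient.mk L (φ g * y) = Ideal.Quotient.mk L (g * y) := by
    intro g y hy
    obtain ⟨h, hh⟩ := hφ g
    rw [Ideal.Quotient.mk_eq_mk_iff_sub_mem, ← sub_mul, hh, mul_assoc]
    exact Ideal.mul_mem_mul (Ideal.mem_span_singleton_self t) (I.mul_mem_left h hy)
  have hminor : ∀ B, StrictMono B → maxMinor M B ∈ I := fun B hB =>
    Ideal.subset_span ⟨B, hB, rfl⟩
  have hmem : ∀ y ∈ I, y ∈ I ∧ (φ y, Ideal.Quotient.mk L y) ∈ Submodule.span R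
      (minorPairs (M.map φ) fun B => Ideal.Quotient.mk L (maxMinor M B)) := by
    intro y hy
    induction hy using Submodule.span_induction with
    | mem y hy =>
      obtain ⟨B, hB, rfl⟩ := hy
      exact ⟨hminor B hB, Submodule.subset_span ⟨B, hB, by rw [maxMinor_map]⟩⟩
    | zero => exact ⟨zero_mem _, by rw [map_zero, map_zero]; exact zero_mem _⟩
    | add y z _ _ hy hz =>
      refine ⟨add_mem hy.1 hz.1, ?_⟩
      rw [map_add, map_add]
      exact add_mem hy.2 hz.2
    | smul g y _ hy =>
      refine ⟨I.mul_mem_left g hy.1, ?_⟩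
      have := Submodule.smul_mem _ (φ g) hy.2
      rw [smul_eq_mul, map_mul, ← hφI g y hy.1]
      exact this
  have hzero : Ideal.Quotient.mk L (t * f) = 0 := by
    refine hpres (R ⧸ L) (fun B => Ideal.Quotient.mk L (maxMinor M B)) ?_ _ ?_
    · intro D hD c
      have h := congrArg (Ideal.Quotient.mk L) (eagonNorthcottRel_maxMinor M D hD c)
      rw [map_sum, map_zero] at h
      rw [← h]
      refine Finset.sum_congr rfl fun a _ => ?_
      have hmem := hminor _ (hD.comp (Fin.strictMono_succAbove a))
      rw [smul_eq_mul, ← hφI _ _ hmem]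
      simp only [map_mul, map_pow, map_neg, map_one, Matrix.map_apply]
      rfl
    · simpa [hφt] using (hmem _ hf).2
  obtain ⟨y, hy, hyf⟩ := Ideal.mem_span_singleton_mul.1 (Ideal.Quotient.eq_zero_iff_mem.1 hzero)
  rwa [← ht hyf]

theorem aeval_sub_self_mem {k σ : Type*} [CommRing k] {v : σ → MvPolynomial σ k}
    {I : Ideal (MvPolynomial σ k)} (hv : ∀ s, v s - X s ∈ I) (g : MvPolynomial σ k) :
    aeval v g - g ∈ I := by
  have h : (Ideal.Quotient.mkₐ k I).comp (aeval v) = Ideal.Quotient.mkₐ k I := by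
    ext s
    simpa using Ideal.Quotient.mk_eq_mk_iff_sub_mem _ _ |>.2 (hv s)
  exact (Ideal.Quotient.mk_eq_mk_iff_sub_mem _ _).1 (DFunLike.congr_fun h g)

/-- The matrix of variables whose maximal minors generate `Kt`, with the order of the rows and
columns reversed. -/
noncomputable def revMatrix {m j : ℕ} (hj : j ≤ m + 2) :
    Matrix (Fin (m + 1)) (Fin j) (MvPolynomial (Option (Fin (m + 2) × Fin (m + 2))) ℂ) :=
  Matrix.of fun a b => zz (m + 2) a.castSucc.rev (Fin.castLE hj b.rev)

theorem Kt_eq_maxMinorIdeal (m : ℕ) [NeZero (m + 2)] {j : ℕ} (hj : j ≤ m + 2) :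
    Kt (m + 2) j = maxMinorIdeal (revMatrix hj) := by
  have hdet : ∀ (B : Fin j → Fin (m + 2)) (C : Fin j → Fin (m + 1)),
      (∀ a, B a = (C a.rev).castSucc.rev) →
      Matrix.det (Matrix.of fun a b : Fin j => zz (m + 2) (B a) ⟨(b : ℕ) % (m + 2),
        Nat.mod_lt _ (Nat.pos_of_ne_zero (NeZero.ne (m + 2)))⟩) = maxMinor (revMatrix hj) C := by
    intro B C hBC
    rw [maxMinor, ← Matrix.det_submatrix_equiv_self Fin.revPerm]
    congr 1
    ext1 a b
    have hb : (b.rev : ℕ) % (m + 2) = b.rev := Nat.mod_eq_of_lt (b.rev.2.trans_le hj)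
    simp only [Matrix.submatrix_apply, Matrix.of_apply, revMatrix, hBC, Fin.revPerm_apply,
      Fin.rev_rev, id, hb]
    rfl
  refine le_antisymm (Ideal.span_mono ?_) (Ideal.span_mono ?_)
  · rintro _ ⟨B, hB, hB1, rfl⟩
    refine ⟨fun a => ⟨m + 1 - B a.rev, by have := hB1 a.rev; omega⟩, fun a b hab => ?_,
      hdet _ _ fun a => ?_⟩
    · have h1 : (B b.rev : ℕ) < B a.rev := hB (Fin.rev_lt_rev.2 hab)
      have h2 := (B a.rev).2
      simp only [Fin.mk_lt_mk]
      omega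
    · ext
      have := (B a).2
      simp only [Fin.rev_rev, Fin.val_rev, Fin.val_castSucc]
      omega
  · rintro _ ⟨C, hC, rfl⟩
    refine ⟨fun a => (C a.rev).castSucc.rev, fun a b hab => ?_, fun a => ?_,
      (hdet _ _ fun a => rfl).symm⟩
    · exact Fin.rev_lt_rev.2 (Fin.castSucc_lt_castSucc_iff.2 (hC (Fin.rev_lt_rev.2 hab)))
    · have := (C a.rev).2
      simp only [Fin.val_rev, Fin.val_castSucc]
      omega

/-- The substitution eliminating the leading variables of the generators of `Jt n i`. -/
noncomputable def elimLast (n : ℕ) [NeZero n] (i : ℕ) :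
    MvPolynomial (Option (Fin n × Fin n)) ℂ →ₐ[ℂ] MvPolynomial (Option (Fin n × Fin n)) ℂ :=
  aeval fun s => s.elim (tt n) fun p =>
    if p.1 = rowN n ∧ (p.2 : ℕ) < i then -(tt n * zz n (row1 n) p.2) else zz n p.1 p.2

theorem elimLast_tt (n : ℕ) [NeZero n] (i : ℕ) : elimLast n i (tt n) = tt n := by
  simp [elimLast, tt]

theorem elimLast_zz (n : ℕ) [NeZero n] (i : ℕ) (a b : Fin n) :
    elimLast n i (zz n a b) =
      if a = rowN n ∧ (b : ℕ) < i then -(tt n * zz n (row1 n) b) else zz n a b := by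
  simp [elimLast, zz]

theorem elimLast_sub_self_mem (n : ℕ) [NeZero n] (i : ℕ)
    (g : MvPolynomial (Option (Fin n × Fin n)) ℂ) : elimLast n i g - g ∈ Jt n i := by
  refine aeval_sub_self_mem (fun s => ?_) g
  rcases s with _ | ⟨a, b⟩
  · simp [tt]
  · by_cases h : a = rowN n ∧ (b : ℕ) < i
    · have hmem : tt n * zz n (row1 n) b + zz n (rowN n) b ∈ Jt n i :=
        Ideal.subset_span ⟨b, h.2, rfl⟩
      rw [Option.elim_some, if_pos h, h.1]
      have := neg_mem hmem
      rwa [neg_add, ← sub_eq_add_neg] at this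
    · rw [Option.elim_some, if_neg h]
      simp [zz]

theorem Jt_le_ker_elimLast {n : ℕ} [NeZero n] (hn : 2 ≤ n) (i : ℕ) :
    Jt n i ≤ RingHom.ker (elimLast n i) := by
  refine Ideal.span_le.2 ?_
  rintro _ ⟨b, hb, rfl⟩
  have hrow : row1 n ≠ rowN n := by
    simp only [row1, rowN, ne_eq, Fin.mk.injEq]
    omega
  rw [SetLike.mem_coe, RingHom.mem_ker, map_add, map_mul, elimLast_tt, elimLast_zz, elimLast_zz,
    if_neg (fun h => hrow h.1), if_pos ⟨rfl, hb⟩, add_neg_cancel]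

/-- The substitution `t = 0`. -/
noncomputable def setTZero (n : ℕ) :
    MvPolynomial (Option (Fin n × Fin n)) ℂ →ₐ[ℂ] MvPolynomial (Option (Fin n × Fin n)) ℂ :=
  aeval fun s => s.elim 0 fun p => zz n p.1 p.2

theorem setTZero_tt (n : ℕ) : setTZero n (tt n) = 0 := by
  simp [setTZero, tt]

theorem setTZero_zz (n : ℕ) (a b : Fin n) : setTZero n (zz n a b) = zz n a b := by
  simp [setTZero, zz]

theorem tt_dvd_setTZero_sub_self (n : ℕ) (g : MvPolynomial (Option (Fin n × Fin n)) ℂ) :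
    tt n ∣ setTZero n g - g := by
  refine Ideal.mem_span_singleton.1 (aeval_sub_self_mem (fun s => ?_) g)
  rcases s with _ | ⟨a, b⟩
  · simp [tt]
  · simp [zz]

theorem isEagonNorthcottPresented_setTZero_elimLast (m : ℕ) [NeZero (m + 2)] {i j : ℕ}
    (hij : i < j + 1) (hj : j + 1 ≤ m + 2) :
    IsEagonNorthcottPresented
      (((revMatrix hj).map (elimLast (m + 2) i)).map (setTZero (m + 2))) := by
  set s : Option (Fin (m + 2) × Fin (m + 2)) :=
    some (Fin.rev 0, Fin.castLE hj (Fin.rev 0)) with hs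
  have hlast : Fin.rev (0 : Fin (m + 2)) = rowN (m + 2) := by
    ext
    simp [rowN]
  have hrow : ∀ a : Fin m, a.succ.castSucc.rev ≠ rowN (m + 2) := by
    intro a h
    rw [← hlast, Fin.rev_inj] at h
    simp [Fin.ext_iff] at h
  have hne : ∀ (a : Fin m) (b : Fin (j + 1)),
      some (a.succ.castSucc.rev, Fin.castLE hj b.rev) ≠ s := by
    intro a b h
    rw [hs, hlast, Option.some_inj, Prod.mk.injEq] at h
    exact hrow a h.1
  have hne' : ∀ b : Fin j, some (Fin.rev 0, Fin.castLE hj b.succ.rev) ≠ s := by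
    intro b h
    simp only [hs, Option.some_inj, Prod.mk.injEq, Fin.castLE_inj, Fin.rev_inj] at h
    exact Fin.succ_ne_zero b h.2
  have hpres := isEagonNorthcottPresented_generic ℂ m (j + 1) {y // y ≠ s}
    (fun a b => ⟨some (a.succ.castSucc.rev, Fin.castLE hj b.rev), hne a b⟩)
    fun a a' b b' h => by simpa using h
  have hpres' := isEagonNorthcottPresented_generic ℂ m j {y // y ≠ s}
    (fun a b => ⟨some (a.succ.castSucc.rev, Fin.castLE hj b.succ.rev), hne a b.succ⟩)
    fun a a' b b' h => by simpa using h
  refine isEagonNorthcottPresented_of_first_row s _ ?_ (fun b => ?_) _ (fun a b => ?_) hpres hpres'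
  · have : ¬ ((Fin.castLE hj (Fin.rev 0) : Fin (m + 2)) : ℕ) < i := by
      simp
      omega
    simp only [Matrix.map_apply, revMatrix, Matrix.of_apply, elimLast_zz, Fin.castSucc_zero,
      this, and_false, if_false, setTZero_zz]
    rfl
  · simp only [Matrix.map_apply, revMatrix, Matrix.of_apply, elimLast_zz, Fin.castSucc_zero]
    split_ifs
    · exact ⟨0, by simp [setTZero_tt]⟩
    · exact ⟨X ⟨_, hne' b⟩, by rw [setTZero_zz, rename_X]; rfl⟩
  · simp only [Matrix.map_apply, revMatrix, Matrix.of_apply, elimLast_zz, hrow, false_and,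
      if_false, setTZero_zz, rename_X]
    rfl

/-- For all `0 ≤ i < j ≤ n`, the ideal `J_i^t + K_j` of `ℂ[t, z_{11}, …, z_{nn}]`
is saturated with respect to `t`: if `t^k f ∈ J_i^t + K_j` then `f ∈ J_i^t + K_j`. -/
theorem Jt_add_Kt_tSaturated (n : ℕ) [NeZero n] (hn : 2 ≤ n) (i j : ℕ)
    (hij : i < j) (hj : j ≤ n) :
    ∀ (f : MvPolynomial (Option (Fin n × Fin n)) ℂ) (k : ℕ),
      (tt n) ^ k * f ∈ Jt n i + Kt n j → f ∈ Jt n i + Kt n j := by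
  intro f k hf
  obtain ⟨m, rfl⟩ : ∃ m, n = m + 2 := ⟨n - 2, by omega⟩
  obtain ⟨j, rfl⟩ : ∃ l, j = l + 1 := ⟨j - 1, by omega⟩
  set ψ := elimLast (m + 2) i with hψ
  set I := maxMinorIdeal ((revMatrix hj).map ψ)
  have hmap : ∀ B, maxMinor ((revMatrix hj).map ψ) B = ψ (maxMinor (revMatrix hj) B) :=
    maxMinor_map ψ.toRingHom _
  have hsub : ∀ g, ψ g - g ∈ Jt (m + 2) i + Kt (m + 2) (j + 1) := fun g =>
    Ideal.mem_sup_left (elimLast_sub_self_mem (m + 2) i g)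
  have hle : Jt (m + 2) i + Kt (m + 2) (j + 1) ≤ I.comap ψ := by
    refine sup_le (fun g hg => ?_) ?_
    · rw [Ideal.mem_comap, RingHom.mem_ker.1 (Jt_le_ker_elimLast hn i hg)]
      exact zero_mem _
    · rw [Kt_eq_maxMinorIdeal m hj]
      refine Ideal.span_le.2 ?_
      rintro _ ⟨B, hB, rfl⟩
      exact Ideal.subset_span ⟨B, hB, (hmap B).symm⟩
  have hIle : I ≤ Jt (m + 2) i + Kt (m + 2) (j + 1) := by
    refine Ideal.span_le.2 ?_
    rintro _ ⟨B, hB, rfl⟩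
    rw [hmap, SetLike.mem_coe, ← sub_add_cancel (ψ _) (maxMinor (revMatrix hj) B)]
    refine add_mem (hsub _) (Ideal.mem_sup_right ?_)
    rw [Kt_eq_maxMinorIdeal m hj]
    exact Ideal.subset_span ⟨B, hB, rfl⟩
  have hreg : IsLeftRegular (tt (m + 2)) :=
    (IsRegular.of_ne_zero (X_ne_zero (none : Option (Fin (m + 2) × Fin (m + 2))))).left
  have hsat : ∀ k : ℕ, ∀ g, tt (m + 2) ^ k * g ∈ I → g ∈ I := by
    intro k
    induction k with
    | zero => simp
    | succ k ih =>
      intro g hg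
      rw [pow_succ', mul_assoc] at hg
      exact ih g (mem_maxMinorIdeal_of_mul_mem hreg (setTZero (m + 2)).toRingHom
        (setTZero_tt _) (tt_dvd_setTZero_sub_self _) _
        (isEagonNorthcottPresented_setTZero_elimLast m hij hj) hg)
  have hfI : ψ f ∈ I := by
    refine hsat k _ ?_
    have := hle hf
    rwa [Ideal.mem_comap, map_mul, map_pow, hψ, elimLast_tt] at this
  have := sub_mem (hIle hfI) (hsub f)
  rwa [sub_sub_cancel] at this
end
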